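/- arXiv:math-ph/0606058 — 2 statements merged into one kernel-verified Lean document; each statement's English description precedes it below -/
import Mathlib

section
/- Fix δ > 0, let ℓ_ε = δ√ε, let 𝓛 = {p = (mℓ_ε, nℓ_ε) : m, n ∈ ℤ, |p| ≤ 1 − 2√2 ℓ_ε}, and for η > 5/2 let Λ = B₁ \ ⋃_{p∈𝓛} B(p, ε^η). Identifying ℝ² with ℂ, define g_ε(z) = ∏_{p∈𝓛} (z − p)/|z − p| on Λ. Then there exist a constant C = C(δ, η) independent of ε and ε₀ > 0 such that for all 0 < ε < ε₀, the kinetic energy of the vortex lattice satisfies ∫_Λ |∇g_ε|² dx ≤ π³/(2δ⁴ε²) + C |log ε| / ε. -/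
open MeasureTheory Real Filter

noncomputable section

/-- Points of the plane. -/
abbrev Pt : Type := EuclideanSpace ℝ (Fin 2)

/-- The open unit disc. -/
def B1 : Set Pt := Metric.ball 0 1

/-- First partial derivative of a complex-valued function. -/
def pd1 (Ψ : Pt → ℂ) (x : Pt) : ℂ := fderiv ℝ Ψ x (EuclideanSpace.single 0 1)

/-- Second partial derivative of a complex-valued function. -/
def pd2 (Ψ : Pt → ℂ) (x : Pt) : ℂ := fderiv ℝ Ψ x (EuclideanSpace.single 1 1)

/-- Angular momentum operator `L = -i (x₁ ∂₂ - x₂ ∂₁)`. -/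
def angMom (Ψ : Pt → ℂ) (x : Pt) : ℂ :=
  -Complex.I * ((x 0 : ℂ) * pd2 Ψ x - (x 1 : ℂ) * pd1 Ψ x)

/-- The Gross-Pitaevskii energy density `|∇Ψ|² - Ω conj(Ψ) LΨ + |Ψ|⁴/ε²`. -/
def gpDensity (ε Ω : ℝ) (Ψ : Pt → ℂ) (x : Pt) : ℝ :=
  ‖pd1 Ψ x‖ ^ 2 + ‖pd2 Ψ x‖ ^ 2
    - Ω * (starRingEnd ℂ (Ψ x) * angMom Ψ x).re
    + ‖Ψ x‖ ^ 4 / ε ^ 2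

/-- The Gross-Pitaevskii functional on the unit disc. -/
def gpEnergy (ε Ω : ℝ) (Ψ : Pt → ℂ) : ℝ := ∫ x in B1, gpDensity ε Ω Ψ x

/-- Admissible (H¹, normalized) wave functions. -/
def gpAdm (Ψ : Pt → ℂ) : Prop :=
  DifferentiableOn ℝ Ψ B1 ∧
  IntegrableOn (fun x => ‖Ψ x‖ ^ 2) B1 ∧
  IntegrableOn (fun x => ‖pd1 Ψ x‖ ^ 2 + ‖pd2 Ψ x‖ ^ 2) B1 ∧
  IntegrableOn (fun x => ‖Ψ x‖ ^ 4) B1 ∧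
  IntegrableOn (fun x => (starRingEnd ℂ (Ψ x) * angMom Ψ x).re) B1 ∧
  (∫ x in B1, ‖Ψ x‖ ^ 2) = 1

/-- The GP ground-state energy: infimum of the functional over normalized functions. -/
def gpGround (ε Ω : ℝ) : ℝ := sInf {E | ∃ Ψ : Pt → ℂ, gpAdm Ψ ∧ E = gpEnergy ε Ω Ψ}

/-- A GP minimizer: a normalized admissible function attaining the infimum. -/
def IsGPMinimizer (ε Ω : ℝ) (Ψ : Pt → ℂ) : Prop :=
  gpAdm Ψ ∧ gpEnergy ε Ω Ψ = gpGround ε Ω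

/-- The Thomas-Fermi functional. -/
def tfEnergy (Ω₀ : ℝ) (ρ : Pt → ℝ) : ℝ :=
  ∫ x in B1, ((ρ x) ^ 2 - Ω₀ ^ 2 * ‖x‖ ^ 2 * ρ x / 4)

/-- Admissible TF densities: nonnegative, in L²(B₁), of total mass one. -/
def tfAdm (ρ : Pt → ℝ) : Prop :=
  IntegrableOn ρ B1 ∧ IntegrableOn (fun x => (ρ x) ^ 2) B1 ∧
  (∀ᵐ x ∂(volume.restrict B1), 0 ≤ ρ x) ∧ (∫ x in B1, ρ x) = 1

/-- The TF ground-state energy. -/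
def tfGround (Ω₀ : ℝ) : ℝ := sInf {E | ∃ ρ : Pt → ℝ, tfAdm ρ ∧ E = tfEnergy Ω₀ ρ}

/-- Radius of the TF "hole". -/
def R0 (Ω₀ : ℝ) : ℝ := Real.sqrt (1 - 4 / (Real.sqrt π * Ω₀))

/-- The TF minimizer. -/
def rhoTF (Ω₀ : ℝ) (x : Pt) : ℝ :=
  if Ω₀ ≤ 4 / Real.sqrt π then 1 / π - Ω₀ ^ 2 / 16 * (1 - 2 * ‖x‖ ^ 2)
  else max 0 (Ω₀ ^ 2 / 8 * (‖x‖ ^ 2 - 1) + Ω₀ / (2 * Real.sqrt π))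

/-- The square lattice of spacing `ℓ` restricted to radius `1 - 2√2 ℓ`. -/
def latt (ℓ : ℝ) : Set Pt :=
  {p | (∃ m : ℤ, p 0 = m * ℓ) ∧ (∃ n : ℤ, p 1 = n * ℓ) ∧ ‖p‖ ≤ 1 - 2 * Real.sqrt 2 * ℓ}

/-- The identification of the plane with `ℂ`. -/
def toC (x : Pt) : ℂ := (x 0 : ℂ) + (x 1 : ℂ) * Complex.I

/-- The phase factor carrying one vortex of degree 1 at each lattice point. -/
def gfun (ℓ : ℝ) (x : Pt) : ℂ := ∏ᶠ p ∈ latt ℓ, (toC x - toC p) / ((‖x - p‖ : ℝ) : ℂ)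

/-- The disc with holes of radius `ρr` around the lattice points removed. -/
def lambdaSet (ℓ ρr : ℝ) : Set Pt := B1 \ ⋃ p ∈ latt ℓ, Metric.ball p ρr

/-!
Since `g` has modulus one, `|∇g|` is the modulus of the field `K(z) = ∑ 1 / (z - p)`, which is
`l⁻²` times the field of a lattice of vortices of charge `l²`. Replace each vortex by a uniform
charge on its square cell: the cells fill the unit disc up to a layer of width `O(l)`, and the
uniform charge on the disc has field `π z̄`. In the error `E = l² K - π z̄`, a distant cell
contributes `O(l⁴ / |z - p|³)` because the linear Taylor term vanishes by symmetry, so all distant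
cells together contribute `O(l)`. The boundary layer and the near vortices contribute
`O(l² log (1 / ρ))` to `∫ |E|²`.

Expanding the square, `l⁴ |K|² = |E|² + 2 π l² Re (z K) - π² |z|²`, which is linear in the lattice
except for `|E|²`. The mean value property gives `∫ Re (z / (z - p)) = π (1 - |p|²)` over the
disc, so `l² ∫ Re (z K)` is a Riemann sum for `π ∫ (1 - |z|²) = π² / 2`. The leading term of
`l⁴ ∫ |K|²` is therefore `2 π · π² / 2 - π² · π / 2 = π³ / 2`.
-/

/-! ### Radial integrals in the plane -/

theorem integrableOn_of_continuous_of_isBounded {X E : Type*} [MetricSpace X] [ProperSpace X]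
    [MeasurableSpace X] [OpensMeasurableSpace X] {μ : Measure X} [IsFiniteMeasureOnCompacts μ]
    [NormedAddCommGroup E] {f : X → E} (hf : Continuous f) {s : Set X}
    (hs : Bornology.IsBounded s) : IntegrableOn f s μ :=
  (hf.continuousOn.integrableOn_compact hs.isCompact_closure).mono_set subset_closure

section Radial

variable (p : ℂ)

theorem measureReal_ball {R : ℝ} (hR : 0 ≤ R) : volume.real (Metric.ball p R) = π * R ^ 2 := by
  rw [Measure.real, Complex.volume_ball, ENNReal.toReal_mul, ENNReal.toReal_pow,
    ENNReal.toReal_ofReal hR, mul_comm]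
  rfl

theorem setOf_norm_sub_mem_Iio_eq_ball (R : ℝ) :
    {z : ℂ | ‖z - p‖ ∈ Set.Iio R} = Metric.ball p R := by
  ext z; simp [dist_eq_norm]

theorem integrableOn_fun_norm_sub_iff (g : ℝ → ℝ) {T : Set ℝ} (hT : MeasurableSet T) :
    IntegrableOn (fun z : ℂ => g ‖z - p‖) {z | ‖z - p‖ ∈ T} ↔
      IntegrableOn (fun r => r * g r) (Set.Ioi 0 ∩ T) := by
  have hm : MeasurableSet {z : ℂ | ‖z - p‖ ∈ T} :=
    (by fun_prop : Measurable fun z : ℂ => ‖z - p‖) hT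
  have hg : (fun r => r * T.indicator g r) = T.indicator fun r => r * g r := by
    ext r; by_cases hr : r ∈ T <;> simp [hr]
  calc IntegrableOn (fun z : ℂ => g ‖z - p‖) {z | ‖z - p‖ ∈ T}
      ↔ Integrable fun z : ℂ => (fun u : ℂ => T.indicator g ‖u‖) (z - p) := by
        rw [← integrable_indicator_iff hm]; rfl
    _ ↔ Integrable fun u : ℂ => T.indicator g ‖u‖ :=
        ⟨fun h => by simpa using h.comp_add_right p, fun h => h.comp_sub_right p⟩
    _ ↔ IntegrableOn (fun r => r * g r) (Set.Ioi 0 ∩ T) := by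
        rw [integrable_fun_norm_addHaar]
        simp only [Complex.finrank_real_complex, Nat.add_one_sub_one, pow_one, smul_eq_mul, hg]
        rw [IntegrableOn, integrable_indicator_iff hT, IntegrableOn, Measure.restrict_restrict hT,
          Set.inter_comm, IntegrableOn]

theorem setIntegral_fun_norm_sub (g : ℝ → ℝ) {T : Set ℝ} (hT : MeasurableSet T) :
    ∫ z in {z : ℂ | ‖z - p‖ ∈ T}, g ‖z - p‖ = 2 * π * ∫ r in Set.Ioi 0 ∩ T, r * g r := by
  have hm : MeasurableSet {z : ℂ | ‖z - p‖ ∈ T} :=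
    (by fun_prop : Measurable fun z : ℂ => ‖z - p‖) hT
  have hg : (fun r => r * T.indicator g r) = T.indicator fun r => r * g r := by
    ext r; by_cases hr : r ∈ T <;> simp [hr]
  calc ∫ z in {z : ℂ | ‖z - p‖ ∈ T}, g ‖z - p‖
      = ∫ z : ℂ, (fun u : ℂ => T.indicator g ‖u‖) (z - p) := by rw [← integral_indicator hm]; rfl
    _ = ∫ u : ℂ, T.indicator g ‖u‖ :=
        integral_sub_right_eq_self (μ := volume) (fun u : ℂ => T.indicator g ‖u‖) p
    _ = 2 * π * ∫ r in Set.Ioi (0 : ℝ), r * T.indicator g r := by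
        rw [integral_fun_norm_addHaar]
        simp [Measure.real, mul_assoc]
    _ = 2 * π * ∫ r in Set.Ioi 0 ∩ T, r * g r := by
        rw [hg, integral_indicator hT, Measure.restrict_restrict hT, Set.inter_comm]

theorem integral_ball_fun_norm_sub (g : ℝ → ℝ) {R : ℝ} (hR : 0 ≤ R) :
    ∫ z in Metric.ball p R, g ‖z - p‖ = 2 * π * ∫ r in (0)..R, r * g r := by
  rw [← setOf_norm_sub_mem_Iio_eq_ball, setIntegral_fun_norm_sub p g measurableSet_Iio,
    Set.Ioi_inter_Iio, ← integral_Ioc_eq_integral_Ioo, intervalIntegral.integral_of_le hR]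

theorem integral_ball_inv_norm_sub {R : ℝ} (hR : 0 ≤ R) :
    ∫ z in Metric.ball p R, ‖z - p‖⁻¹ = 2 * π * R := by
  rw [integral_ball_fun_norm_sub p (fun r => r⁻¹) hR, intervalIntegral.integral_of_le hR,
    setIntegral_congr_fun (g := fun _ => (1 : ℝ)) measurableSet_Ioc
      fun r hr => mul_inv_cancel₀ hr.1.ne']
  simp [hR]

theorem integrableOn_inv_norm_sub {s : Set ℂ} (hs : Bornology.IsBounded s) :
    IntegrableOn (fun z => ‖z - p‖⁻¹) s := by
  obtain ⟨R, hR⟩ := hs.subset_ball p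
  refine IntegrableOn.mono_set ?_ hR
  rw [← setOf_norm_sub_mem_Iio_eq_ball,
    integrableOn_fun_norm_sub_iff p (fun r => r⁻¹) measurableSet_Iio, Set.Ioi_inter_Iio]
  exact (integrableOn_const (C := (1 : ℝ)) (by simp)).congr_fun
    (fun r hr => (mul_inv_cancel₀ hr.1.ne').symm) measurableSet_Ioo

theorem integrableOn_inv_sub {s : Set ℂ} (hs : Bornology.IsBounded s) :
    IntegrableOn (fun z => (z - p)⁻¹) s :=
  (integrableOn_inv_norm_sub p hs).mono' (by fun_prop) (.of_forall fun z => by simp)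

theorem setOf_norm_sub_mem_Ici_eq_compl_ball (R : ℝ) :
    {z : ℂ | ‖z - p‖ ∈ Set.Ici R} = (Metric.ball p R)ᶜ := by
  ext z; simp [dist_eq_norm]

theorem eqOn_mul_inv_pow_three_rpow :
    Set.EqOn (fun r : ℝ => r * (r ^ 3)⁻¹) (fun r => r ^ (-2 : ℝ)) (Set.Ioi 0) := by
  intro r hr
  have hr0 : 0 < r := hr
  simp only [Real.rpow_neg hr0.le]
  norm_cast
  field_simp

theorem integrableOn_compl_ball_inv_norm_sub_pow_three {l : ℝ} (hl : 0 < l) :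
    IntegrableOn (fun z => (‖z - p‖ ^ 3)⁻¹) (Metric.ball p l)ᶜ := by
  rw [← setOf_norm_sub_mem_Ici_eq_compl_ball,
    integrableOn_fun_norm_sub_iff p (fun r => (r ^ 3)⁻¹) measurableSet_Ici,
    Set.inter_eq_right.2 (Set.Ici_subset_Ioi.2 hl), integrableOn_Ici_iff_integrableOn_Ioi]
  exact (integrableOn_Ioi_rpow_of_lt (by norm_num) hl).congr_fun
    (eqOn_mul_inv_pow_three_rpow.symm.mono (Set.Ioi_subset_Ioi hl.le)) measurableSet_Ioi

theorem integral_compl_ball_inv_norm_sub_pow_three {l : ℝ} (hl : 0 < l) :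
    ∫ z in (Metric.ball p l)ᶜ, (‖z - p‖ ^ 3)⁻¹ = 2 * π / l := by
  rw [← setOf_norm_sub_mem_Ici_eq_compl_ball,
    setIntegral_fun_norm_sub p (fun r => (r ^ 3)⁻¹) measurableSet_Ici,
    Set.inter_eq_right.2 (Set.Ici_subset_Ioi.2 hl), integral_Ici_eq_integral_Ioi,
    setIntegral_congr_fun measurableSet_Ioi
      (eqOn_mul_inv_pow_three_rpow.mono (Set.Ioi_subset_Ioi hl.le)),
    integral_Ioi_rpow_of_lt (by norm_num) hl]
  norm_num [Real.rpow_neg hl.le]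
  field_simp

theorem integral_ball_inv_sq_max_norm_sub {ρ R : ℝ} (hρ : 0 < ρ) (hR : ρ ≤ R) :
    ∫ z in Metric.ball p R, ((max ρ ‖z - p‖) ^ 2)⁻¹ = π + 2 * π * log (R / ρ) := by
  have hcont : Continuous fun r : ℝ => r * ((max ρ r) ^ 2)⁻¹ := by
    refine continuous_id.mul (Continuous.inv₀ (by fun_prop) fun r => ?_)
    have : 0 < max ρ r := lt_max_of_lt_left hρ
    positivity
  have hinner : ∫ r in (0)..ρ, r * ((max ρ r) ^ 2)⁻¹ = 1 / 2 := by
    rw [intervalIntegral.integral_congr (g := fun r => r * (ρ ^ 2)⁻¹)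
      fun r hr => by simp only [max_eq_left (Set.uIcc_of_le hρ.le ▸ hr).2]]
    rw [intervalIntegral.integral_mul_const, integral_id]
    field_simp
    ring
  have houter : ∫ r in ρ..R, r * ((max ρ r) ^ 2)⁻¹ = log (R / ρ) := by
    rw [← integral_one_div fun h => (Set.uIcc_of_le hR ▸ h).1.not_gt hρ]
    refine intervalIntegral.integral_congr fun r hr => ?_
    have hr' := (Set.uIcc_of_le hR ▸ hr).1
    have : r ≠ 0 := (hρ.trans_le hr').ne'
    simp only [max_eq_right hr']
    field_simp
  rw [integral_ball_fun_norm_sub p (fun r => ((max ρ r) ^ 2)⁻¹) (hρ.le.trans hR),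
    ← intervalIntegral.integral_add_adjacent_intervals (hcont.intervalIntegrable 0 ρ)
      (hcont.intervalIntegrable ρ R), hinner, houter]
  ring

theorem integral_ball_zero_one_norm_sq : ∫ z in Metric.ball (0 : ℂ) 1, ‖z‖ ^ 2 = π / 2 := by
  have h := integral_ball_fun_norm_sub 0 (fun r => r ^ 2) zero_le_one
  simp only [sub_zero, ← pow_succ', integral_pow] at h
  rw [h]
  norm_num
  ring

end Radial

/-! ### The Cauchy transform of a disc -/

theorem integral_Ioo_polarCoord_symm_eq_circleAverage {E : Type*} [NormedAddCommGroup E]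
    [NormedSpace ℝ E] (f : ℂ → E) (r : ℝ) :
    ∫ θ in Set.Ioo (-π) π, f (Complex.polarCoord.symm (r, θ)) = (2 * π) • circleAverage f 0 r := by
  have hper : Function.Periodic (fun θ : ℝ => f (circleMap 0 r θ)) (2 * π) := fun θ => by
    simp only [periodic_circleMap 0 r θ]
  rw [circleAverage_def, smul_smul, mul_inv_cancel₀ (by positivity), one_smul]
  have h := hper.intervalIntegral_add_eq (-π) 0
  rw [zero_add, show -π + 2 * π = π by ring,
    intervalIntegral.integral_of_le (by linarith [pi_pos]), integral_Ioc_eq_integral_Ioo] at h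
  rw [← h]
  congr 1
  ext θ
  simp [circleMap, Complex.exp_mul_I]

theorem integrableOn_polarCoord_symm {E : Type*} [NormedAddCommGroup E] [NormedSpace ℝ E]
    {f : ℂ → E} (hf : Integrable f) :
    IntegrableOn (fun q : ℝ × ℝ => q.1 • f (Complex.polarCoord.symm q)) polarCoord.target := by
  have hf' : Integrable fun q : ℝ × ℝ => f (Complex.measurableEquivRealProd.symm q) :=
    (Complex.volume_preserving_equiv_real_prod.symm.integrable_comp_emb
      Complex.measurableEquivRealProd.symm.measurableEmbedding).2 hf
  have h := (integrableOn_image_iff_integrableOn_abs_det_fderiv_smul volume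
    polarCoord.open_target.measurableSet
    (fun q _ => (hasFDerivAt_polarCoord_symm q).hasFDerivWithinAt) polarCoord.symm.injOn _).1
    hf'.integrableOn
  refine h.congr_fun (fun q hq => ?_) polarCoord.open_target.measurableSet
  simp only [det_fderivPolarCoordSymm, abs_of_pos (show 0 < q.1 from hq.1),
    Complex.measurableEquivRealProd_symm_polarCoord_symm_apply]

theorem integral_ball_eq_integral_circleAverage {E : Type*} [NormedAddCommGroup E]
    [NormedSpace ℝ E] {f : ℂ → E} {R : ℝ} (hf : IntegrableOn f (Metric.ball 0 R)) :
    ∫ z in Metric.ball 0 R, f z = ∫ r in Set.Ioo 0 R, (2 * π * r) • circleAverage f 0 r := by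
  set F := (Metric.ball (0 : ℂ) R).indicator f
  have hFi : Integrable F := (integrable_indicator_iff measurableSet_ball).2 hf
  have hcircle : ∀ r ∈ Set.Ioi (0 : ℝ),
      ∫ θ in Set.Ioo (-π) π, r • F (Complex.polarCoord.symm (r, θ)) =
        (Set.Iio R).indicator (fun r => (2 * π * r) • circleAverage f 0 r) r := by
    intro r hr
    rw [integral_smul, integral_Ioo_polarCoord_symm_eq_circleAverage, smul_smul, mul_comm r]
    by_cases hrR : r < R
    · rw [Set.indicator_of_mem (show r ∈ Set.Iio R from hrR)]
      congr 1
      exact circleAverage_congr_sphere fun z hz => Set.indicator_of_mem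
        (by simpa [abs_of_pos hr.out, mem_sphere_zero_iff_norm.1 hz] using hrR) f
    · rw [Set.indicator_of_notMem (show r ∉ Set.Iio R from hrR)]
      have : circleAverage F 0 r = circleAverage (fun _ => 0) 0 r :=
        circleAverage_congr_sphere fun z hz => Set.indicator_of_notMem
          (by simpa [abs_of_pos hr.out, mem_sphere_zero_iff_norm.1 hz] using hrR) f
      rw [this, circleAverage_def, intervalIntegral.integral_zero, smul_zero, smul_zero]
  calc ∫ z in Metric.ball 0 R, f z
      = ∫ q in polarCoord.target, q.1 • F (Complex.polarCoord.symm q) := by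
        rw [Complex.integral_comp_polarCoord_symm, integral_indicator measurableSet_ball]
    _ = ∫ r in Set.Ioi 0, ∫ θ in Set.Ioo (-π) π, r • F (Complex.polarCoord.symm (r, θ)) := by
        have h := integrableOn_polarCoord_symm hFi
        rw [polarCoord_target] at h ⊢
        rw [Measure.volume_eq_prod, setIntegral_prod _ h]
    _ = ∫ r in Set.Ioo 0 R, (2 * π * r) • circleAverage f 0 r := by
        rw [setIntegral_congr_fun measurableSet_Ioi hcircle, integral_indicator measurableSet_Iio,
          Measure.restrict_restrict measurableSet_Iio, Set.Iio_inter_Ioi]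

theorem circleAverage_div_sub_of_norm_lt {p : ℂ} {r : ℝ} (hp : ‖p‖ < r) :
    circleAverage (fun z => z / (z - p)) 0 r = 1 := by
  have h := (diffContOnCl_const (c := (1 : ℂ))).circleAverage_smul_div
    (show p ∈ Metric.ball 0 |r| by simpa using hp.trans_le (le_abs_self r))
  simpa using h

theorem circleAverage_div_sub_of_lt_norm {p : ℂ} {r : ℝ} (hr : 0 ≤ r) (hp : r < ‖p‖) :
    circleAverage (fun z => z / (z - p)) 0 r = 0 := by
  have hd : DifferentiableOn ℂ (fun z => z / (z - p)) (Metric.closedBall 0 |r|) := fun z hz => by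
    have hz : ‖z‖ ≤ r := by simpa [abs_of_nonneg hr] using hz
    have : z - p ≠ 0 := sub_ne_zero.2 fun h => (h ▸ hz).not_gt hp
    fun_prop (disch := exact this)
  simpa using (hd.mono Metric.closure_ball_subset_closedBall).diffContOnCl.circleAverage

theorem integrableOn_div_sub (p : ℂ) {s : Set ℂ} (hs : Bornology.IsBounded s) :
    IntegrableOn (fun z => z / (z - p)) s := by
  simp only [div_eq_mul_inv]
  exact ((integrableOn_inv_sub p hs.closure).continuousOn_mul continuousOn_id
    hs.isCompact_closure).mono_set subset_closure

theorem integral_ball_div_sub {p : ℂ} {R : ℝ} (hp : ‖p‖ < R) :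
    ∫ z in Metric.ball 0 R, z / (z - p) = π * (R ^ 2 - ‖p‖ ^ 2) := by
  have hcircle : ∀ᵐ r, r ∈ Set.Ioo 0 R → (2 * π * r) • circleAverage (fun z => z / (z - p)) 0 r =
      (Set.Ioo ‖p‖ R).indicator (fun r : ℝ => ((2 * π * r : ℝ) : ℂ)) r := by
    filter_upwards [Measure.ae_ne volume ‖p‖] with r hne hr
    rcases lt_or_gt_of_ne hne with h | h
    · rw [circleAverage_div_sub_of_lt_norm hr.1.le h, smul_zero,
        Set.indicator_of_notMem fun h' => h'.1.not_gt h]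
    · rw [circleAverage_div_sub_of_norm_lt h,
        Set.indicator_of_mem (Set.mem_Ioo.2 ⟨h, hr.2⟩), Complex.real_smul, mul_one]
  rw [integral_ball_eq_integral_circleAverage (integrableOn_div_sub p Metric.isBounded_ball),
    setIntegral_congr_ae measurableSet_Ioo hcircle,
    setIntegral_indicator measurableSet_Ioo,
    Set.inter_eq_right.2 (Set.Ioo_subset_Ioo_left (norm_nonneg p)), integral_complex_ofReal,
    ← integral_Ioc_eq_integral_Ioo, ← intervalIntegral.integral_of_le hp.le,
    intervalIntegral.integral_const_mul, integral_id]
  push_cast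
  ring

theorem setIntegral_eq_zero_of_pointReflection {f : ℂ → ℂ} {s : Set ℂ} (hs : MeasurableSet s)
    (p : ℂ) (hsymm : ∀ z, 2 * p - z ∈ s ↔ z ∈ s) (hf : ∀ z, f (2 * p - z) = -f z) :
    ∫ z in s, f z = 0 := by
  have hind : ∀ z, s.indicator f (2 * p - z) = -s.indicator f z := fun z => by
    by_cases hz : z ∈ s
    · rw [Set.indicator_of_mem hz, Set.indicator_of_mem ((hsymm z).2 hz), hf]
    · rw [Set.indicator_of_notMem hz, Set.indicator_of_notMem (mt (hsymm z).1 hz), neg_zero]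
  have h := integral_sub_left_eq_self (s.indicator f) volume (2 * p)
  simp only [hind, integral_neg, integral_indicator hs] at h
  exact self_eq_neg.1 h.symm

theorem integral_ball_inv_sub {p : ℂ} {R : ℝ} (hp : ‖p‖ < R) :
    ∫ z in Metric.ball 0 R, (z - p)⁻¹ = -π * starRingEnd ℂ p := by
  rcases eq_or_ne p 0 with rfl | hp0
  · rw [setIntegral_eq_zero_of_pointReflection measurableSet_ball 0 (by simp) (by simp [inv_neg]),
      map_zero, mul_zero]
  have hdiv : ∀ᵐ z, z ∈ Metric.ball 0 R → (z - p)⁻¹ = p⁻¹ * (z / (z - p) - 1) := by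
    filter_upwards [Measure.ae_ne volume p] with z hz _
    have := sub_ne_zero.2 hz
    field_simp
    ring
  have hvol : ∫ _ in Metric.ball (0 : ℂ) R, (1 : ℂ) = π * R ^ 2 := by
    simp [measureReal_ball 0 ((norm_nonneg p).trans hp.le)]
  have hconj : (‖p‖ : ℂ) ^ 2 = p * starRingEnd ℂ p := (Complex.mul_conj' p).symm
  rw [setIntegral_congr_ae measurableSet_ball hdiv, integral_const_mul,
    integral_sub (integrableOn_div_sub p Metric.isBounded_ball)
      (integrableOn_const measure_ball_lt_top.ne),
    integral_ball_div_sub hp, hvol, hconj]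
  field_simp
  ring

/-! ### Square cells -/

theorem volume_reProdIm (s t : Set ℝ) : volume (s ×ℂ t) = volume s * volume t := by
  rw [← Measure.prod_prod, ← Measure.volume_eq_prod,
    ← Complex.volume_preserving_equiv_real_prod.measure_preimage_equiv]
  rfl

/-- The open square of side `l` centred at `p`, i.e. the lattice cell carrying the vortex `p`.
It is open so that it is exactly invariant under the reflection about `p`. -/
def openSquare (l : ℝ) (p : ℂ) : Set ℂ :=
  Set.Ioo (p.re - l / 2) (p.re + l / 2) ×ℂ Set.Ioo (p.im - l / 2) (p.im + l / 2)

theorem mem_openSquare {l : ℝ} {p w : ℂ} :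
    w ∈ openSquare l p ↔ |w.re - p.re| < l / 2 ∧ |w.im - p.im| < l / 2 := by
  rw [openSquare, Complex.mem_reProdIm, Set.mem_Ioo, Set.mem_Ioo, abs_lt, abs_lt]
  constructor <;> rintro ⟨⟨_, _⟩, _, _⟩ <;> refine ⟨⟨?_, ?_⟩, ?_, ?_⟩ <;> linarith

section Cell

variable (l : ℝ) (p : ℂ)

theorem measurableSet_openSquare : MeasurableSet (openSquare l p) :=
  (isOpen_Ioo.reProdIm isOpen_Ioo).measurableSet

theorem openSquare_subset_ball : openSquare l p ⊆ Metric.ball p l := fun w hw => by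
  obtain ⟨hre, him⟩ := mem_openSquare.1 hw
  rw [mem_ball_iff_norm]
  refine (Complex.norm_le_abs_re_add_abs_im _).trans_lt ?_
  rw [Complex.sub_re, Complex.sub_im]
  linarith

theorem isBounded_openSquare : Bornology.IsBounded (openSquare l p) :=
  Metric.isBounded_ball.subset (openSquare_subset_ball l p)

theorem measureReal_openSquare {l : ℝ} (hl : 0 ≤ l) : volume.real (openSquare l p) = l ^ 2 := by
  rw [Measure.real, openSquare, volume_reProdIm, Real.volume_Ioo, Real.volume_Ioo,
    ENNReal.toReal_mul, ENNReal.toReal_ofReal (by linarith), ENNReal.toReal_ofReal (by linarith)]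
  ring

theorem closure_openSquare {l : ℝ} (hl : 0 < l) : closure (openSquare l p) =
    Set.Icc (p.re - l / 2) (p.re + l / 2) ×ℂ Set.Icc (p.im - l / 2) (p.im + l / 2) := by
  rw [openSquare, Complex.closure_reProdIm, closure_Ioo (by linarith), closure_Ioo (by linarith)]

theorem measureReal_closure_openSquare {l : ℝ} (hl : 0 < l) :
    volume.real (closure (openSquare l p)) = l ^ 2 := by
  rw [Measure.real, closure_openSquare p hl, volume_reProdIm, Real.volume_Icc, Real.volume_Icc,
    ENNReal.toReal_mul, ENNReal.toReal_ofReal (by linarith), ENNReal.toReal_ofReal (by linarith)]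
  ring

theorem integral_openSquare_sub_center : ∫ w in openSquare l p, (w - p) = 0 := by
  refine setIntegral_eq_zero_of_pointReflection (measurableSet_openSquare l p) p (fun w => ?_)
    fun w => by ring
  simp only [mem_openSquare, Complex.sub_re, Complex.sub_im, Complex.mul_re, Complex.mul_im,
    Complex.re_ofNat, Complex.im_ofNat]
  rw [abs_sub_comm w.re, abs_sub_comm w.im]
  ring_nf

end Cell

theorem measurableSet_biUnion_openSquare (l : ℝ) (L : Finset ℂ) :
    MeasurableSet (⋃ p ∈ L, openSquare l p) :=
  L.measurableSet_biUnion fun p _ => measurableSet_openSquare l p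

/-- The part of the unit disc not covered by the cells. -/
def boundaryLayer (l : ℝ) (L : Finset ℂ) : Set ℂ := Metric.ball 0 1 \ ⋃ p ∈ L, openSquare l p

/-- The cells of side `l` around the points of `L` tile the unit disc up to a layer of
width `4 * l` at its boundary. Covering is expressed by areas, so that cells may be open. -/
structure IsDiscTiling (l : ℝ) (L : Finset ℂ) : Prop where
  pairwiseDisjoint : (L : Set ℂ).PairwiseDisjoint (openSquare l)
  subset_ball : ∀ p ∈ L, openSquare l p ⊆ Metric.ball 0 1
  le_card_mul_sq : π * (1 - 4 * l) ^ 2 ≤ L.card * l ^ 2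

namespace IsDiscTiling

variable {l : ℝ} {L : Finset ℂ}

theorem norm_lt_one (h : IsDiscTiling l L) (hl : 0 < l) {p : ℂ} (hp : p ∈ L) : ‖p‖ < 1 := by
  simpa using h.subset_ball p hp (mem_openSquare.2 (by simpa using hl))

theorem sum_integral_openSquare_le (h : IsDiscTiling l L) {M : Finset ℂ} (hM : M ⊆ L) {T : Set ℂ}
    (hMT : ∀ p ∈ M, openSquare l p ⊆ T) {f : ℂ → ℝ} (hf : IntegrableOn f T)
    (hf0 : 0 ≤ᵐ[volume.restrict T] f) : ∑ p ∈ M, ∫ w in openSquare l p, f w ≤ ∫ w in T, f w := by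
  rw [← integral_biUnion_finset M (fun p _ => measurableSet_openSquare l p)
    (h.pairwiseDisjoint.subset (Finset.coe_subset.2 hM)) fun p hp => hf.mono_set (hMT p hp)]
  exact setIntegral_mono_set hf hf0 (Set.iUnion₂_subset hMT).eventuallyLE

theorem card_mul_sq_le (h : IsDiscTiling l L) (hl : 0 ≤ l) {M : Finset ℂ} (hM : M ⊆ L) {z : ℂ}
    {R : ℝ} (hR : 0 ≤ R) (hMz : ∀ p ∈ M, openSquare l p ⊆ Metric.ball z R) :
    M.card * l ^ 2 ≤ π * R ^ 2 := by
  have key := h.sum_integral_openSquare_le hM hMz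
    (integrableOn_const (C := (1 : ℝ)) measure_ball_lt_top.ne) (.of_forall fun _ => zero_le_one)
  simpa [measureReal_openSquare _ hl, measureReal_ball z hR] using key

theorem measureReal_biUnion_openSquare (h : IsDiscTiling l L) (hl : 0 ≤ l) :
    volume.real (⋃ p ∈ L, openSquare l p) = L.card * l ^ 2 := by
  rw [measureReal_biUnion_finset h.pairwiseDisjoint (fun p _ => measurableSet_openSquare l p)
    fun p _ => (isBounded_openSquare l p).measure_lt_top.ne]
  simp [measureReal_openSquare _ hl]

theorem measureReal_boundaryLayer_le (h : IsDiscTiling l L) (hl : 0 ≤ l) :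
    volume.real (boundaryLayer l L) ≤ 8 * π * l := by
  rw [boundaryLayer, measureReal_sdiff (Set.iUnion₂_subset h.subset_ball)
    (measurableSet_biUnion_openSquare l L), measureReal_ball 0 zero_le_one,
    h.measureReal_biUnion_openSquare hl]
  nlinarith [h.le_card_mul_sq, pi_pos, mul_nonneg pi_pos.le (sq_nonneg l)]

theorem integral_ball_eq_sum_add (h : IsDiscTiling l L) {f : ℂ → ℂ}
    (hf : IntegrableOn f (Metric.ball 0 1)) :
    ∫ w in Metric.ball 0 1, f w =
      (∑ p ∈ L, ∫ w in openSquare l p, f w) + ∫ w in boundaryLayer l L, f w := by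
  rw [boundaryLayer, setIntegral_sdiff (measurableSet_biUnion_openSquare l L) hf
    (Set.iUnion₂_subset h.subset_ball),
    integral_biUnion_finset L (fun p _ => measurableSet_openSquare l p) h.pairwiseDisjoint
      fun p hp => hf.mono_set (h.subset_ball p hp)]
  ring

end IsDiscTiling

theorem pairwiseDisjoint_openSquare_of_lattice {l : ℝ} (hl : 0 < l) {s : Set ℂ}
    (hs : ∀ p ∈ s, (∃ m : ℤ, p.re = m * l) ∧ ∃ n : ℤ, p.im = n * l) :
    s.PairwiseDisjoint (openSquare l) := by
  have hcoord : ∀ {m n : ℤ} {x : ℝ}, |x - m * l| < l / 2 → |x - n * l| < l / 2 → m = n := by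
    intro m n x hm hn
    have hlt : |((m - n : ℤ) : ℝ)| * l < 1 * l := by
      rw [← abs_of_pos hl, ← abs_mul, abs_of_pos hl]
      push_cast
      rw [sub_mul]
      rw [abs_sub_comm] at hm
      linarith [abs_sub_le (m * l) x (n * l)]
    exact sub_eq_zero.1 (Int.abs_lt_one_iff.1 (by exact_mod_cast lt_of_mul_lt_mul_right hlt hl.le))
  intro p hp q hq hpq
  refine Set.disjoint_left.2 fun w hwp hwq => hpq ?_
  obtain ⟨⟨m, hm⟩, n, hn⟩ := hs p hp
  obtain ⟨⟨m', hm'⟩, n', hn'⟩ := hs q hq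
  rw [mem_openSquare, hm, hn] at hwp
  rw [mem_openSquare, hm', hn'] at hwq
  exact Complex.ext (by rw [hm, hm', hcoord hwp.1 hwq.1]) (by rw [hn, hn', hcoord hwp.2 hwq.2])

theorem exists_int_abs_sub_mul_le {l : ℝ} (hl : 0 < l) (x : ℝ) : ∃ m : ℤ, |x - m * l| ≤ l / 2 := by
  refine ⟨round (x / l), ?_⟩
  have h := mul_le_mul_of_nonneg_right (abs_sub_round (x / l)) hl.le
  rw [← abs_of_pos hl, ← abs_mul, abs_of_pos hl, sub_mul, div_mul_cancel₀ _ hl.ne'] at h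
  linarith

theorem ball_subset_biUnion_closure_openSquare {l : ℝ} (hl : 0 < l) {L : Finset ℂ}
    (hL : ∀ m n : ℤ, ‖(⟨m * l, n * l⟩ : ℂ)‖ ≤ 1 - 3 * l → ⟨m * l, n * l⟩ ∈ L) :
    Metric.ball 0 (1 - 4 * l) ⊆ ⋃ p ∈ L, closure (openSquare l p) := by
  intro w hw
  obtain ⟨m, hm⟩ := exists_int_abs_sub_mul_le hl w.re
  obtain ⟨n, hn⟩ := exists_int_abs_sub_mul_le hl w.im
  have hwmn : w ∈ closure (openSquare l ⟨m * l, n * l⟩) := by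
    rw [abs_le] at hm hn
    rw [closure_openSquare _ hl]
    exact ⟨⟨by linarith, by linarith⟩, by linarith, by linarith⟩
  have hdist : ‖w - ⟨m * l, n * l⟩‖ ≤ l := mem_closedBall_iff_norm.1 <|
    Metric.closure_ball_subset_closedBall (closure_mono (openSquare_subset_ball l _) hwmn)
  refine Set.mem_biUnion (hL m n ?_) hwmn
  rw [mem_ball_zero_iff] at hw
  linarith [norm_sub_norm_le (⟨m * l, n * l⟩ : ℂ) w, norm_sub_rev w ⟨m * l, n * l⟩]

theorem isDiscTiling_lattice {l : ℝ} (hl : 0 < l) (hl4 : 4 * l ≤ 1) {L : Finset ℂ}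
    (hL : ∀ p, p ∈ L ↔
      ((∃ m : ℤ, p.re = m * l) ∧ ∃ n : ℤ, p.im = n * l) ∧ ‖p‖ ≤ 1 - 2 * √2 * l) :
    IsDiscTiling l L where
  pairwiseDisjoint := pairwiseDisjoint_openSquare_of_lattice hl fun p hp => ((hL p).1 hp).1
  subset_ball p hp w hw := by
    have hp1 := ((hL p).1 hp).2
    have hwp := mem_ball_iff_norm.1 (openSquare_subset_ball l p hw)
    have hsqrt : 1 ≤ √2 := Real.one_le_sqrt.2 one_le_two
    rw [mem_ball_zero_iff]
    nlinarith [norm_sub_norm_le w p]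
  le_card_mul_sq := by
    have hsqrt : √2 ≤ 3 / 2 := Real.sqrt_le_iff.2 (by norm_num)
    have hcover : Metric.ball 0 (1 - 4 * l) ⊆ ⋃ p ∈ L, closure (openSquare l p) :=
      ball_subset_biUnion_closure_openSquare hl fun m n hmn =>
        (hL _).2 ⟨⟨⟨m, rfl⟩, n, rfl⟩, hmn.trans (by nlinarith)⟩
    have hfinite : volume (⋃ p ∈ L, closure (openSquare l p)) ≠ ⊤ :=
      ((Bornology.isBounded_biUnion_finset L).2
        fun p _ => (isBounded_openSquare l p).closure).measure_lt_top.ne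
    calc π * (1 - 4 * l) ^ 2 = volume.real (Metric.ball (0 : ℂ) (1 - 4 * l)) := by
          rw [measureReal_ball 0 (sub_nonneg.2 hl4)]
      _ ≤ volume.real (⋃ p ∈ L, closure (openSquare l p)) := measureReal_mono hcover hfinite
      _ ≤ ∑ p ∈ L, volume.real (closure (openSquare l p)) := measureReal_biUnion_finset_le L _
      _ = L.card * l ^ 2 := by simp [measureReal_closure_openSquare _ hl]

/-! ### The field of the lattice against the field of the uniform charge -/

section CellField

variable {l : ℝ} {p z : ℂ}

theorem openSquare_subset_compl_ball (h : 2 * l ≤ ‖z - p‖) :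
    openSquare l p ⊆ (Metric.ball z l)ᶜ := fun w hw hwz => by
  have hwp := mem_ball_iff_norm.1 (openSquare_subset_ball l p hw)
  have hwz := mem_ball_iff_norm'.1 hwz
  linarith [norm_sub_le_norm_sub_add_norm_sub z w p]

theorem openSquare_subset_ball_three_mul (h : ‖z - p‖ < 2 * l) :
    openSquare l p ⊆ Metric.ball z (3 * l) := fun w hw => by
  have hwp := mem_ball_iff_norm.1 (openSquare_subset_ball l p hw)
  rw [mem_ball_iff_norm]
  linarith [norm_sub_le_norm_sub_add_norm_sub w p z, norm_sub_rev p z]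

theorem norm_near_cell_field_le (l : ℝ) (p z : ℂ) :
    ‖l ^ 2 * (z - p)⁻¹ + ∫ w in openSquare l p, (w - z)⁻¹‖ ≤
      l ^ 2 * ‖z - p‖⁻¹ + ∫ w in openSquare l p, ‖w - z‖⁻¹ := by
  refine (norm_add_le _ _).trans (add_le_add (by simp) ?_)
  simpa only [norm_inv] using norm_integral_le_integral_norm (fun w : ℂ => (w - z)⁻¹)

theorem norm_cell_remainder_le {w : ℂ} (hw : w ∈ openSquare l p) (h : 2 * l ≤ ‖z - p‖) :
    ‖(w - p) ^ 2 * ((z - p) ^ 2)⁻¹ * (w - z)⁻¹‖ ≤ 9 / 4 * l ^ 2 * (‖w - z‖ ^ 3)⁻¹ := by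
  have hwp : ‖w - p‖ < l := mem_ball_iff_norm.1 (openSquare_subset_ball l p hw)
  have hl : 0 < l := (norm_nonneg _).trans_lt hwp
  have hwz : l ≤ ‖w - z‖ := by simpa [dist_eq_norm] using openSquare_subset_compl_ball h hw
  have hcompare : ‖w - z‖ ≤ 3 / 2 * ‖z - p‖ := by
    linarith [norm_sub_le_norm_sub_add_norm_sub w p z, norm_sub_rev p z]
  have hwz0 : 0 < ‖w - z‖ := hl.trans_le hwz
  have hinv : (‖z - p‖ ^ 2)⁻¹ ≤ 9 / 4 * (‖w - z‖ ^ 2)⁻¹ := by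
    rw [← div_eq_mul_inv, inv_eq_one_div, div_le_div_iff₀ (by nlinarith) (by positivity)]
    nlinarith
  calc ‖(w - p) ^ 2 * ((z - p) ^ 2)⁻¹ * (w - z)⁻¹‖
      = ‖w - p‖ ^ 2 * (‖z - p‖ ^ 2)⁻¹ * ‖w - z‖⁻¹ := by simp only [norm_mul, norm_inv, norm_pow]
    _ ≤ l ^ 2 * (9 / 4 * (‖w - z‖ ^ 2)⁻¹) * ‖w - z‖⁻¹ := by gcongr
    _ = 9 / 4 * l ^ 2 * (‖w - z‖ ^ 3)⁻¹ := by field_simp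

-- The linear Taylor term integrates to zero because `p` is the centre of its cell.
theorem norm_far_cell_field_le (hl : 0 < l) (h : 2 * l ≤ ‖z - p‖) :
    ‖l ^ 2 * (z - p)⁻¹ + ∫ w in openSquare l p, (w - z)⁻¹‖ ≤
      9 / 4 * l ^ 2 * ∫ w in openSquare l p, (‖w - z‖ ^ 3)⁻¹ := by
  have hzp : z - p ≠ 0 := norm_pos_iff.1 (by linarith)
  have htaylor : ∀ w ∈ openSquare l p, (w - p) ^ 2 * ((z - p) ^ 2)⁻¹ * (w - z)⁻¹ =
      (w - z)⁻¹ + ((z - p)⁻¹ + (w - p) * ((z - p) ^ 2)⁻¹) := fun w hw => by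
    have hwz : w - z ≠ 0 := sub_ne_zero.2 fun hwz =>
      openSquare_subset_compl_ball h hw (hwz ▸ Metric.mem_ball_self hl)
    field_simp
    ring
  have hbdd := isBounded_openSquare l p
  have hconst : IntegrableOn (fun _ => (z - p)⁻¹) (openSquare l p) :=
    integrableOn_const hbdd.measure_lt_top.ne
  have hlin : IntegrableOn (fun w => (w - p) * ((z - p) ^ 2)⁻¹) (openSquare l p) :=
    integrableOn_of_continuous_of_isBounded (by fun_prop) hbdd
  have hremainder : ∫ w in openSquare l p, (w - p) ^ 2 * ((z - p) ^ 2)⁻¹ * (w - z)⁻¹ =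
      l ^ 2 * (z - p)⁻¹ + ∫ w in openSquare l p, (w - z)⁻¹ := by
    rw [setIntegral_congr_fun (measurableSet_openSquare l p) htaylor,
      integral_add (g := fun w => (z - p)⁻¹ + (w - p) * ((z - p) ^ 2)⁻¹)
        (integrableOn_inv_sub z hbdd) (hconst.add hlin), integral_add hconst hlin,
      integral_mul_const, integral_openSquare_sub_center, setIntegral_const,
      measureReal_openSquare p hl.le, zero_mul, add_zero, add_comm, Complex.real_smul,
      Complex.ofReal_pow]
  rw [← hremainder, ← integral_const_mul]
  refine norm_integral_le_of_norm_le (Integrable.const_mul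
    ((integrableOn_compl_ball_inv_norm_sub_pow_three z hl).mono_set
      (openSquare_subset_compl_ball h)) _) ?_
  filter_upwards [ae_restrict_mem (measurableSet_openSquare l p)] with w hw
    using norm_cell_remainder_le hw h

end CellField

/-- The field `∑ (z - p)⁻¹` of unit vortices at the points of `L`; up to conjugation and a
rotation it is the gradient of the phase of `∏ (z - p) / ‖z - p‖`. -/
def vortexField (L : Finset ℂ) (z : ℂ) : ℂ := ∑ p ∈ L, (z - p)⁻¹

/-- The deviation of the field of vortices of density `l⁻²` from that of a uniform charge on the
unit disc, `π z̄ / l²`, multiplied by `l²`. -/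
def fieldError (l : ℝ) (L : Finset ℂ) (z : ℂ) : ℂ :=
  l ^ 2 * vortexField L z - π * starRingEnd ℂ z

namespace IsDiscTiling

variable {l : ℝ} {L : Finset ℂ} {z : ℂ}

theorem fieldError_eq (h : IsDiscTiling l L) (hz : ‖z‖ < 1) :
    fieldError l L z = (∑ p ∈ L, (l ^ 2 * (z - p)⁻¹ + ∫ w in openSquare l p, (w - z)⁻¹)) +
      ∫ w in boundaryLayer l L, (w - z)⁻¹ := by
  have hdisc := h.integral_ball_eq_sum_add (integrableOn_inv_sub z Metric.isBounded_ball)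
  rw [integral_ball_inv_sub hz] at hdisc
  rw [fieldError, vortexField, Finset.sum_add_distrib, add_assoc, ← hdisc, Finset.mul_sum]
  ring

theorem sum_near_le (h : IsDiscTiling l L) (hl : 0 < l) (z : ℂ) :
    ∑ p ∈ L with ‖z - p‖ < 2 * l, ∫ w in openSquare l p, ‖w - z‖⁻¹ ≤ 6 * π * l := by
  refine (h.sum_integral_openSquare_le (Finset.filter_subset _ L)
    (fun p hp => openSquare_subset_ball_three_mul (Finset.mem_filter.1 hp).2)
    (integrableOn_inv_norm_sub z Metric.isBounded_ball)
    (.of_forall fun w => by positivity)).trans_eq ?_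
  rw [integral_ball_inv_norm_sub z (by positivity)]
  ring

theorem sum_far_le (h : IsDiscTiling l L) (hl : 0 < l) (z : ℂ) :
    ∑ p ∈ L with ¬‖z - p‖ < 2 * l, ∫ w in openSquare l p, (‖w - z‖ ^ 3)⁻¹ ≤ 2 * π / l := by
  refine (h.sum_integral_openSquare_le (Finset.filter_subset _ L)
    (fun p hp => openSquare_subset_compl_ball (not_lt.1 (Finset.mem_filter.1 hp).2))
    (integrableOn_compl_ball_inv_norm_sub_pow_three z hl)
    (.of_forall fun w => by positivity)).trans_eq ?_
  rw [integral_compl_ball_inv_norm_sub_pow_three z hl]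

theorem norm_fieldError_le (h : IsDiscTiling l L) (hl : 0 < l) (hz : ‖z‖ < 1) :
    ‖fieldError l L z‖ ≤ l ^ 2 * (∑ p ∈ L with ‖z - p‖ < 2 * l, ‖z - p‖⁻¹) + 21 / 2 * π * l +
      ∫ w in boundaryLayer l L, ‖w - z‖⁻¹ := by
  set F : ℂ → ℂ := fun p => l ^ 2 * (z - p)⁻¹ + ∫ w in openSquare l p, (w - z)⁻¹
  have hnear : ∑ p ∈ L with ‖z - p‖ < 2 * l, ‖F p‖ ≤
      l ^ 2 * (∑ p ∈ L with ‖z - p‖ < 2 * l, ‖z - p‖⁻¹) + 6 * π * l := by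
    refine (Finset.sum_le_sum fun p _ => norm_near_cell_field_le l p z).trans ?_
    rw [Finset.sum_add_distrib, ← Finset.mul_sum]
    linarith [h.sum_near_le hl z]
  have hfar : ∑ p ∈ L with ¬‖z - p‖ < 2 * l, ‖F p‖ ≤ 9 / 2 * π * l := by
    calc ∑ p ∈ L with ¬‖z - p‖ < 2 * l, ‖F p‖
        ≤ ∑ p ∈ L with ¬‖z - p‖ < 2 * l, 9 / 4 * l ^ 2 * ∫ w in openSquare l p, (‖w - z‖ ^ 3)⁻¹ :=
          Finset.sum_le_sum fun p hp =>
            norm_far_cell_field_le hl (not_lt.1 (Finset.mem_filter.1 hp).2)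
      _ ≤ 9 / 4 * l ^ 2 * (2 * π / l) := by
          rw [← Finset.mul_sum]
          gcongr
          exact h.sum_far_le hl z
      _ = 9 / 2 * π * l := by field_simp; ring
  have hlayer : ‖∫ w in boundaryLayer l L, (w - z)⁻¹‖ ≤ ∫ w in boundaryLayer l L, ‖w - z‖⁻¹ := by
    simpa only [norm_inv] using norm_integral_le_integral_norm (fun w : ℂ => (w - z)⁻¹)
  have hcells : ‖∑ p ∈ L, F p‖ ≤
      ∑ p ∈ L with ‖z - p‖ < 2 * l, ‖F p‖ + ∑ p ∈ L with ¬‖z - p‖ < 2 * l, ‖F p‖ :=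
    (norm_sum_le _ _).trans_eq (Finset.sum_filter_add_sum_filter_not L _ _).symm
  rw [h.fieldError_eq hz]
  linarith [norm_add_le (∑ p ∈ L, F p) (∫ w in boundaryLayer l L, (w - z)⁻¹)]

end IsDiscTiling

/-! ### Square-integrability of the error -/

theorem sq_integral_le_measureReal_univ_mul {α : Type*} [MeasurableSpace α] {μ : Measure α}
    [IsFiniteMeasure μ] {f : α → ℝ} (hf : Integrable f μ) (hf2 : Integrable (fun x => f x ^ 2) μ) :
    (∫ x, f x ∂μ) ^ 2 ≤ μ.real Set.univ * ∫ x, f x ^ 2 ∂μ := by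
  have hquadratic (t : ℝ) :
      0 ≤ μ.real Set.univ * (t * t) + -2 * (∫ x, f x ∂μ) * t + ∫ x, f x ^ 2 ∂μ := by
    have hnonneg : 0 ≤ ∫ x, (f x ^ 2 - 2 * t * f x + t ^ 2) ∂μ :=
      integral_nonneg fun x => by
        change 0 ≤ f x ^ 2 - 2 * t * f x + t ^ 2
        nlinarith [sq_nonneg (f x - t)]
    rw [integral_add (f := fun x => f x ^ 2 - 2 * t * f x) (hf2.sub (hf.const_mul _))
      (integrable_const _),
      integral_sub hf2 (hf.const_mul _), integral_const_mul, integral_const, smul_eq_mul] at hnonneg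
    linarith
  have hdiscrim := discrim_le_zero hquadratic
  rw [discrim] at hdiscrim
  linarith

section TruncatedKernel

variable {r : ℝ}

theorem integrable_inv_max_norm_pow (hr : 0 < r) (n : ℕ) {α : Type*} [MeasurableSpace α]
    {μ : Measure α} [IsFiniteMeasure μ] {f : α → ℂ} (hf : Measurable f) :
    Integrable (fun x => (max r ‖f x‖)⁻¹ ^ n) μ :=
  .of_mem_Icc 0 (r⁻¹ ^ n) (by fun_prop) <| .of_forall fun _ => by
    constructor
    · positivity
    · gcongr
      exact le_max_left _ _

theorem setIntegral_inv_norm_sub_le_add (hr : 0 < r) (z : ℂ) {s : Set ℂ}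
    (hs : Bornology.IsBounded s) (hsm : MeasurableSet s) :
    ∫ w in s, ‖w - z‖⁻¹ ≤ 2 * π * r + ∫ w in s, (max r ‖w - z‖)⁻¹ := by
  have : IsFiniteMeasure (volume.restrict s) := isFiniteMeasure_restrict.2 hs.measure_lt_top.ne
  have hk := integrableOn_inv_norm_sub z hs
  have hmax : IntegrableOn (fun w => (max r ‖w - z‖)⁻¹) s := by
    simpa only [pow_one, IntegrableOn] using integrable_inv_max_norm_pow hr 1 (by fun_prop)
  have hinside : ∫ w in s ∩ Metric.ball z r, ‖w - z‖⁻¹ ≤ 2 * π * r := by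
    rw [← integral_ball_inv_norm_sub z hr.le]
    exact setIntegral_mono_set (integrableOn_inv_norm_sub z Metric.isBounded_ball)
      (.of_forall fun w => by simp) Set.inter_subset_right.eventuallyLE
  have houtside : ∫ w in s \ Metric.ball z r, ‖w - z‖⁻¹ ≤ ∫ w in s, (max r ‖w - z‖)⁻¹ := by
    rw [setIntegral_congr_fun (g := fun w => (max r ‖w - z‖)⁻¹) (hsm.diff measurableSet_ball)
      fun w hw => by simp only [max_eq_right (not_lt.1 (mem_ball_iff_norm.not.1 hw.2))]]
    exact setIntegral_mono_set hmax (.of_forall fun w =>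
      inv_nonneg.2 (hr.le.trans (le_max_left _ _)))
      Set.sdiff_subset.eventuallyLE
  rw [← integral_inter_add_sdiff measurableSet_ball hk]
  exact add_le_add hinside houtside

theorem sq_setIntegral_inv_max_le (hr : 0 < r) (z : ℂ) {s : Set ℂ} (hs : volume s ≠ ⊤) :
    (∫ w in s, (max r ‖w - z‖)⁻¹) ^ 2 ≤
      volume.real s * ∫ w in s, (max r ‖w - z‖)⁻¹ ^ 2 := by
  have : IsFiniteMeasure (volume.restrict s) := isFiniteMeasure_restrict.2 hs
  have hk (n : ℕ) : Integrable (fun w => (max r ‖w - z‖)⁻¹ ^ n) (volume.restrict s) :=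
    integrable_inv_max_norm_pow hr n (by fun_prop)
  simpa using sq_integral_le_measureReal_univ_mul (by simpa only [pow_one] using hk 1) (hk 2)

theorem integrable_inv_max_norm_sub_pow_prod (hr : 0 < r) (n : ℕ) {s t : Set ℂ}
    (hs : volume s ≠ ⊤) (ht : volume t ≠ ⊤) :
    Integrable (fun q : ℂ × ℂ => (max r ‖q.2 - q.1‖)⁻¹ ^ n)
      ((volume.restrict t).prod (volume.restrict s)) :=
  have := isFiniteMeasure_restrict.2 hs
  have := isFiniteMeasure_restrict.2 ht
  integrable_inv_max_norm_pow hr n (by fun_prop)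

theorem integrableOn_sq_setIntegral_inv_max (hr : 0 < r) {s t : Set ℂ} (hs : volume s ≠ ⊤)
    (ht : volume t ≠ ⊤) : IntegrableOn (fun z => (∫ w in s, (max r ‖w - z‖)⁻¹) ^ 2) t := by
  have hk := (integrable_inv_max_norm_sub_pow_prod hr 1 hs ht).integral_prod_left
  simp only [pow_one] at hk
  refine ((integrable_inv_max_norm_sub_pow_prod hr 2 hs ht).integral_prod_left.const_mul
    (volume.real s)).mono' (hk.aestronglyMeasurable.pow 2) (.of_forall fun z => ?_)
  rw [Real.norm_of_nonneg (sq_nonneg _)]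
  exact sq_setIntegral_inv_max_le hr z hs

theorem integral_ball_zero_one_sq_inv_max_le (hr : 0 < r) (hr2 : r ≤ 2) {w : ℂ} (hw : ‖w‖ ≤ 1) :
    ∫ z in Metric.ball 0 1, (max r ‖w - z‖)⁻¹ ^ 2 ≤ π + 2 * π * log (2 / r) := by
  have hdisc : Metric.ball 0 1 ⊆ Metric.ball w 2 :=
    Metric.ball_subset_ball' (by linarith [dist_zero_left w])
  have : IsFiniteMeasure (volume.restrict (Metric.ball w 2)) :=
    isFiniteMeasure_restrict.2 measure_ball_lt_top.ne
  simp only [norm_sub_rev w]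
  calc ∫ z in Metric.ball 0 1, (max r ‖z - w‖)⁻¹ ^ 2
      ≤ ∫ z in Metric.ball w 2, (max r ‖z - w‖)⁻¹ ^ 2 :=
        setIntegral_mono_set (integrable_inv_max_norm_pow hr 2 (by fun_prop))
          (.of_forall fun z => sq_nonneg _) hdisc.eventuallyLE
    _ = π + 2 * π * log (2 / r) := by
        simp only [inv_pow]
        exact integral_ball_inv_sq_max_norm_sub w hr hr2

theorem integral_ball_sq_setIntegral_inv_max_le (hr : 0 < r) (hr2 : r ≤ 2) {s : Set ℂ}
    (hs : s ⊆ Metric.ball 0 1) (hsm : MeasurableSet s) :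
    ∫ z in Metric.ball 0 1, (∫ w in s, (max r ‖w - z‖)⁻¹) ^ 2 ≤
      volume.real s ^ 2 * (π + 2 * π * log (2 / r)) := by
  have hsfin : volume s ≠ ⊤ := ((measure_mono hs).trans_lt measure_ball_lt_top).ne
  have : IsFiniteMeasure (volume.restrict s) := isFiniteMeasure_restrict.2 hsfin
  have hprod := integrable_inv_max_norm_sub_pow_prod hr 2 hsfin
    (measure_ball_lt_top (x := (0 : ℂ)) (r := 1)).ne
  calc ∫ z in Metric.ball 0 1, (∫ w in s, (max r ‖w - z‖)⁻¹) ^ 2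
      ≤ ∫ z in Metric.ball 0 1, volume.real s * ∫ w in s, (max r ‖w - z‖)⁻¹ ^ 2 :=
        integral_mono_of_nonneg (.of_forall fun z => sq_nonneg _)
          (hprod.integral_prod_left.const_mul _)
          (.of_forall fun z => sq_setIntegral_inv_max_le hr z hsfin)
    _ = volume.real s * ∫ w in s, ∫ z in Metric.ball 0 1, (max r ‖w - z‖)⁻¹ ^ 2 := by
        rw [integral_const_mul, integral_integral_swap hprod]
    _ ≤ volume.real s * ∫ w in s, (π + 2 * π * log (2 / r)) := by
        refine mul_le_mul_of_nonneg_left ?_ measureReal_nonneg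
        exact setIntegral_mono_on hprod.integral_prod_right (integrable_const _) hsm fun w hw =>
          integral_ball_zero_one_sq_inv_max_le hr hr2 (mem_ball_zero_iff.1 (hs hw)).le
    _ = volume.real s ^ 2 * (π + 2 * π * log (2 / r)) := by
        rw [setIntegral_const, smul_eq_mul]
        ring

end TruncatedKernel

/-- The unit disc with discs of radius `ρ` around the points of `L` removed; the image of
`lambdaSet` under the identification of the plane with `ℂ`. -/
def perforatedDisc (ρ : ℝ) (L : Finset ℂ) : Set ℂ := Metric.ball 0 1 \ ⋃ p ∈ L, Metric.ball p ρ

section PerforatedDisc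

variable {ρ : ℝ} {L : Finset ℂ}

theorem measurableSet_biUnion_ball (ρ : ℝ) (L : Finset ℂ) :
    MeasurableSet (⋃ p ∈ L, Metric.ball p ρ) :=
  L.measurableSet_biUnion fun _ _ => measurableSet_ball

theorem measurableSet_perforatedDisc (ρ : ℝ) (L : Finset ℂ) :
    MeasurableSet (perforatedDisc ρ L) :=
  measurableSet_ball.diff (measurableSet_biUnion_ball ρ L)

theorem perforatedDisc_subset_ball (ρ : ℝ) (L : Finset ℂ) :
    perforatedDisc ρ L ⊆ Metric.ball 0 1 := Set.sdiff_subset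

theorem le_norm_sub_of_mem_perforatedDisc {z p : ℂ} (hz : z ∈ perforatedDisc ρ L) (hp : p ∈ L) :
    ρ ≤ ‖z - p‖ :=
  not_lt.1 fun hzp => hz.2 (Set.mem_biUnion hp (mem_ball_iff_norm.2 hzp))

end PerforatedDisc

section NearSum

variable {l ρ : ℝ} {L : Finset ℂ} {z : ℂ}

/-- The sum of the squared fields of the vortices at distance less than `2 * l`, truncated at
distance `ρ` from each vortex. -/
def nearSqSum (l ρ : ℝ) (L : Finset ℂ) (z : ℂ) : ℝ :=
  ∑ p ∈ L, (Metric.ball p (2 * l)).indicator (fun z => (max ρ ‖z - p‖)⁻¹ ^ 2) z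

theorem integrable_indicator_ball_inv_max_sq (hρ : 0 < ρ) (p : ℂ) (R : ℝ) :
    Integrable ((Metric.ball p R).indicator fun z => (max ρ ‖z - p‖)⁻¹ ^ 2) := by
  have : IsFiniteMeasure (volume.restrict (Metric.ball p R)) :=
    isFiniteMeasure_restrict.2 measure_ball_lt_top.ne
  exact (integrable_indicator_iff measurableSet_ball).2
    (integrable_inv_max_norm_pow hρ 2 (by fun_prop))

theorem integrable_nearSqSum (l : ℝ) (hρ : 0 < ρ) (L : Finset ℂ) : Integrable (nearSqSum l ρ L) :=
  integrable_finsetSum L fun p _ => integrable_indicator_ball_inv_max_sq hρ p (2 * l)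

theorem nearSqSum_nonneg (l ρ : ℝ) (L : Finset ℂ) (z : ℂ) : 0 ≤ nearSqSum l ρ L z :=
  Finset.sum_nonneg fun _ _ => Set.indicator_nonneg (fun _ _ => sq_nonneg _) z

theorem integral_nearSqSum (hρ : 0 < ρ) (hρl : ρ ≤ 2 * l) (L : Finset ℂ) :
    ∫ z, nearSqSum l ρ L z = L.card * (π + 2 * π * log (2 * l / ρ)) := by
  unfold nearSqSum
  rw [integral_finsetSum L fun p _ => integrable_indicator_ball_inv_max_sq hρ p (2 * l)]
  simp only [integral_indicator measurableSet_ball, inv_pow,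
    integral_ball_inv_sq_max_norm_sub _ hρ hρl, Finset.sum_const, nsmul_eq_mul]

end NearSum

theorem boundaryLayer_subset_ball (l : ℝ) (L : Finset ℂ) : boundaryLayer l L ⊆ Metric.ball 0 1 :=
  Set.sdiff_subset

theorem measurableSet_boundaryLayer (l : ℝ) (L : Finset ℂ) : MeasurableSet (boundaryLayer l L) :=
  measurableSet_ball.diff (measurableSet_biUnion_openSquare l L)

theorem volume_boundaryLayer_ne_top (l : ℝ) (L : Finset ℂ) : volume (boundaryLayer l L) ≠ ⊤ :=
  ((measure_mono (boundaryLayer_subset_ball l L)).trans_lt measure_ball_lt_top).ne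

theorem measurable_fieldError (l : ℝ) (L : Finset ℂ) : Measurable (fieldError l L) := by
  unfold fieldError vortexField
  fun_prop

/-- An integrable upper bound for `‖fieldError l L z‖ ^ 2` on `perforatedDisc ρ L`, obtained by
squaring `IsDiscTiling.norm_fieldError_le` with `(a + b + c)² ≤ 3 (a² + b² + c²)`. -/
def errorMajorant (l ρ : ℝ) (L : Finset ℂ) (z : ℂ) : ℝ :=
  27 * π * l ^ 4 * nearSqSum l ρ L z + 1875 / 4 * π ^ 2 * l ^ 2 +
    3 * (∫ w in boundaryLayer l L, (max l ‖w - z‖)⁻¹) ^ 2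

theorem integrableOn_errorMajorant {l ρ : ℝ} (hl : 0 < l) (hρ : 0 < ρ) (L : Finset ℂ) :
    IntegrableOn (errorMajorant l ρ L) (Metric.ball 0 1) :=
  (((integrable_nearSqSum l hρ L).integrableOn.const_mul _).add
    (integrableOn_const measure_ball_lt_top.ne)).add
    ((integrableOn_sq_setIntegral_inv_max hl (volume_boundaryLayer_ne_top l L)
      measure_ball_lt_top.ne).const_mul 3)

theorem errorMajorant_nonneg (l ρ : ℝ) (L : Finset ℂ) (z : ℂ) : 0 ≤ errorMajorant l ρ L z := by
  have := nearSqSum_nonneg l ρ L z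
  unfold errorMajorant
  positivity

theorem one_le_log_inv {x : ℝ} (hx : 0 < x) (hx3 : x ≤ 1 / 3) : 1 ≤ log x⁻¹ := by
  rw [le_log_iff_exp_le (by positivity)]
  refine exp_one_lt_three.le.trans ?_
  rw [le_inv_comm₀ (by norm_num) hx]
  linarith

namespace IsDiscTiling

variable {l ρ : ℝ} {L : Finset ℂ} {z : ℂ}

theorem card_le (h : IsDiscTiling l L) (hl : 0 < l) : L.card ≤ π / l ^ 2 := by
  rw [le_div_iff₀ (by positivity)]
  simpa using h.card_mul_sq_le hl.le subset_rfl zero_le_one h.subset_ball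

theorem card_near_le (h : IsDiscTiling l L) (hl : 0 < l) (z : ℂ) :
    (L.filter fun p => ‖z - p‖ < 2 * l).card ≤ 9 * π := by
  have hcells := h.card_mul_sq_le hl.le (Finset.filter_subset _ L) (z := z) (R := 3 * l)
    (by positivity) fun p hp => openSquare_subset_ball_three_mul (Finset.mem_filter.1 hp).2
  nlinarith [pow_pos hl 2]

theorem sq_sum_near_le_nearSqSum (h : IsDiscTiling l L) (hl : 0 < l)
    (hz : z ∈ perforatedDisc ρ L) :
    (∑ p ∈ L with ‖z - p‖ < 2 * l, ‖z - p‖⁻¹) ^ 2 ≤ 9 * π * nearSqSum l ρ L z := by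
  have hsum : ∑ p ∈ L with ‖z - p‖ < 2 * l, ‖z - p‖⁻¹ ^ 2 = nearSqSum l ρ L z := by
    classical
    rw [nearSqSum, Finset.sum_filter]
    refine Finset.sum_congr rfl fun p hp => ?_
    rw [Set.indicator_apply, max_eq_right (le_norm_sub_of_mem_perforatedDisc hz hp)]
    simp only [mem_ball_iff_norm]
  refine sq_sum_le_card_mul_sum_sq.trans ?_
  rw [hsum]
  exact mul_le_mul_of_nonneg_right (h.card_near_le hl z) (nearSqSum_nonneg l ρ L z)

theorem sq_norm_fieldError_le (h : IsDiscTiling l L) (hl : 0 < l) (hz : z ∈ perforatedDisc ρ L) :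
    ‖fieldError l L z‖ ^ 2 ≤ errorMajorant l ρ L z := by
  set S := ∑ p ∈ L with ‖z - p‖ < 2 * l, ‖z - p‖⁻¹
  set J := ∫ w in boundaryLayer l L, (max l ‖w - z‖)⁻¹
  have hlayer := setIntegral_inv_norm_sub_le_add hl z
    (Metric.isBounded_ball.subset (boundaryLayer_subset_ball l L)) (measurableSet_boundaryLayer l L)
  have herror : ‖fieldError l L z‖ ≤ l ^ 2 * S + 25 / 2 * π * l + J := by
    linarith [h.norm_fieldError_le hl (mem_ball_zero_iff.1 hz.1)]
  calc ‖fieldError l L z‖ ^ 2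
      ≤ (l ^ 2 * S + 25 / 2 * π * l + J) ^ 2 := by gcongr
    _ ≤ 3 * ((l ^ 2 * S) ^ 2 + (25 / 2 * π * l) ^ 2 + J ^ 2) := by
        nlinarith [sq_nonneg (l ^ 2 * S - 25 / 2 * π * l), sq_nonneg (l ^ 2 * S - J),
          sq_nonneg (25 / 2 * π * l - J)]
    _ = 3 * l ^ 4 * S ^ 2 + 1875 / 4 * π ^ 2 * l ^ 2 + 3 * J ^ 2 := by ring
    _ ≤ 3 * l ^ 4 * (9 * π * nearSqSum l ρ L z) + 1875 / 4 * π ^ 2 * l ^ 2 + 3 * J ^ 2 := by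
        gcongr
        exact h.sq_sum_near_le_nearSqSum hl hz
    _ = errorMajorant l ρ L z := by rw [errorMajorant]; ring

theorem integral_nearSqSum_ball_le (h : IsDiscTiling l L) (hl : 0 < l) (hρ : 0 < ρ) (hρl : ρ ≤ l) :
    ∫ z in Metric.ball 0 1, nearSqSum l ρ L z ≤ π / l ^ 2 * (π + 2 * π * log (2 * l / ρ)) := by
  have hlog : 0 ≤ log (2 * l / ρ) := log_nonneg ((one_le_div hρ).2 (by linarith))
  refine (setIntegral_le_integral (integrable_nearSqSum l hρ L)
    (.of_forall (nearSqSum_nonneg l ρ L))).trans ?_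
  rw [integral_nearSqSum hρ (by linarith)]
  gcongr
  exact h.card_le hl

theorem integral_ball_sq_setIntegral_boundaryLayer_le (h : IsDiscTiling l L) (hl : 0 < l)
    (hl1 : l ≤ 1) :
    ∫ z in Metric.ball 0 1, (∫ w in boundaryLayer l L, (max l ‖w - z‖)⁻¹) ^ 2 ≤
      (8 * π * l) ^ 2 * (π + 2 * π * log (2 / l)) := by
  have hlog : 0 ≤ log (2 / l) := log_nonneg ((one_le_div hl).2 (by linarith))
  refine (integral_ball_sq_setIntegral_inv_max_le hl (by linarith)
    (boundaryLayer_subset_ball l L) (measurableSet_boundaryLayer l L)).trans ?_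
  gcongr
  exact h.measureReal_boundaryLayer_le hl.le

theorem integral_errorMajorant_le (h : IsDiscTiling l L) (hl : 0 < l) (hl1 : l ≤ 1) (hρ : 0 < ρ)
    (hρl : ρ ≤ l) :
    ∫ z in Metric.ball 0 1, errorMajorant l ρ L z ≤
      π ^ 3 * l ^ 2 *
        (27 * (1 + 2 * log (2 * l / ρ)) + 1875 / 4 + 192 * (1 + 2 * log (2 / l))) := by
  have hnear := ((integrable_nearSqSum l hρ L).integrableOn (s := Metric.ball 0 1)).const_mul
    (27 * π * l ^ 4)
  have hconst := integrableOn_const (μ := volume) (s := Metric.ball (0 : ℂ) 1)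
    (C := 1875 / 4 * π ^ 2 * l ^ 2) measure_ball_lt_top.ne
  have hlayer := (integrableOn_sq_setIntegral_inv_max (t := Metric.ball 0 1) hl
    (volume_boundaryLayer_ne_top l L) measure_ball_lt_top.ne).const_mul 3
  have hsplit : ∫ z in Metric.ball 0 1, errorMajorant l ρ L z =
      27 * π * l ^ 4 * (∫ z in Metric.ball 0 1, nearSqSum l ρ L z) + 1875 / 4 * π ^ 3 * l ^ 2 +
        3 * ∫ z in Metric.ball 0 1, (∫ w in boundaryLayer l L, (max l ‖w - z‖)⁻¹) ^ 2 := by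
    refine (integral_add (hnear.add hconst) hlayer).trans ?_
    rw [integral_add' hnear hconst, integral_const_mul, integral_const_mul 3,
      setIntegral_const, measureReal_ball 0 zero_le_one, smul_eq_mul]
    ring
  calc ∫ z in Metric.ball 0 1, errorMajorant l ρ L z
      ≤ 27 * π * l ^ 4 * (π / l ^ 2 * (π + 2 * π * log (2 * l / ρ))) + 1875 / 4 * π ^ 3 * l ^ 2 +
        3 * ((8 * π * l) ^ 2 * (π + 2 * π * log (2 / l))) := by
        rw [hsplit]
        gcongr
        · exact h.integral_nearSqSum_ball_le hl hρ hρl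
        · exact h.integral_ball_sq_setIntegral_boundaryLayer_le hl hl1
    _ = π ^ 3 * l ^ 2 *
        (27 * (1 + 2 * log (2 * l / ρ)) + 1875 / 4 + 192 * (1 + 2 * log (2 / l))) := by
        field_simp
        ring

theorem integrableOn_sq_norm_fieldError (h : IsDiscTiling l L) (hl : 0 < l) (hρ : 0 < ρ) :
    IntegrableOn (fun z => ‖fieldError l L z‖ ^ 2) (perforatedDisc ρ L) := by
  refine ((integrableOn_errorMajorant hl hρ L).mono_set (perforatedDisc_subset_ball ρ L)).mono'
    ((measurable_fieldError l L).norm.pow_const 2).aestronglyMeasurable ?_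
  filter_upwards [ae_restrict_mem (measurableSet_perforatedDisc ρ L)] with z hz
  rw [Real.norm_of_nonneg (sq_nonneg _)]
  exact h.sq_norm_fieldError_le hl hz

theorem integral_sq_norm_fieldError_le (h : IsDiscTiling l L) (hl : 0 < l) (hl16 : l ≤ 1 / 16)
    (hρ : 0 < ρ) (hρl : ρ ≤ l ^ 3) :
    ∫ z in perforatedDisc ρ L, ‖fieldError l L z‖ ^ 2 ≤ 1200 * π ^ 3 * l ^ 2 * log ρ⁻¹ := by
  have hcube : l ^ 3 ≤ 1 / 256 * l := by nlinarith [mul_pos hl hl]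
  have hone : 1 ≤ log ρ⁻¹ := one_le_log_inv hρ (by linarith)
  have hnearlog : log (2 * l / ρ) ≤ log ρ⁻¹ := by
    rw [div_eq_mul_inv]
    exact log_le_log (by positivity) (mul_le_of_le_one_left (by positivity) (by linarith))
  have hlayerlog : log (2 / l) ≤ log ρ⁻¹ := by
    refine log_le_log (by positivity) ?_
    rw [div_le_iff₀ hl, ← div_eq_inv_mul, le_div_iff₀ hρ]
    linarith
  have hmajorant : ∫ z in perforatedDisc ρ L, ‖fieldError l L z‖ ^ 2 ≤
      ∫ z in Metric.ball 0 1, errorMajorant l ρ L z :=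
    (setIntegral_mono_on (h.integrableOn_sq_norm_fieldError hl hρ)
      ((integrableOn_errorMajorant hl hρ L).mono_set (perforatedDisc_subset_ball ρ L))
      (measurableSet_perforatedDisc ρ L) fun z hz => h.sq_norm_fieldError_le hl hz).trans
    (setIntegral_mono_set (integrableOn_errorMajorant hl hρ L)
      (.of_forall (errorMajorant_nonneg l ρ L)) (perforatedDisc_subset_ball ρ L).eventuallyLE)
  calc ∫ z in perforatedDisc ρ L, ‖fieldError l L z‖ ^ 2
      ≤ π ^ 3 * l ^ 2 * (27 * (1 + 2 * log (2 * l / ρ)) + 1875 / 4 + 192 * (1 + 2 * log (2 / l))) :=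
        hmajorant.trans (h.integral_errorMajorant_le hl (by linarith) hρ (by linarith))
    _ ≤ π ^ 3 * l ^ 2 * (1200 * log ρ⁻¹) := by
        gcongr
        linarith
    _ = 1200 * π ^ 3 * l ^ 2 * log ρ⁻¹ := by ring

end IsDiscTiling

/-! ### Cross term and holes -/

theorem pow_four_mul_sq_norm_vortexField (l : ℝ) (L : Finset ℂ) (z : ℂ) :
    l ^ 4 * ‖vortexField L z‖ ^ 2 =
      ‖fieldError l L z‖ ^ 2 + 2 * π * l ^ 2 * (z * vortexField L z).re - π ^ 2 * ‖z‖ ^ 2 := by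
  rw [fieldError, ← Complex.ofReal_pow]
  simp only [← Complex.normSq_eq_norm_sq, Complex.normSq_apply, Complex.mul_re, Complex.mul_im,
    Complex.conj_re, Complex.conj_im, Complex.sub_re, Complex.sub_im, Complex.ofReal_re,
    Complex.ofReal_im]
  ring

theorem re_mul_vortexField (L : Finset ℂ) (z : ℂ) :
    (z * vortexField L z).re = ∑ p ∈ L, (z / (z - p)).re := by
  simp only [vortexField, Finset.mul_sum, Complex.re_sum, div_eq_mul_inv]

theorem integrableOn_re_mul_vortexField (L : Finset ℂ) {s : Set ℂ} (hs : Bornology.IsBounded s) :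
    IntegrableOn (fun z => (z * vortexField L z).re) s := by
  simp only [re_mul_vortexField]
  exact integrable_finsetSum L fun p _ => (integrableOn_div_sub p hs).re

theorem integral_ball_re_mul_vortexField {L : Finset ℂ} (hL : ∀ p ∈ L, ‖p‖ < 1) :
    ∫ z in Metric.ball 0 1, (z * vortexField L z).re = π * ∑ p ∈ L, (1 - ‖p‖ ^ 2) := by
  have hint (p : ℂ) := integrableOn_div_sub p (Metric.isBounded_ball (x := (0 : ℂ)) (r := 1))
  simp only [re_mul_vortexField]
  rw [integral_finsetSum (f := fun p z => (z / (z - p)).re) L fun p _ => (hint p).re,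
    Finset.mul_sum]
  refine Finset.sum_congr rfl fun p hp => ?_
  have hre := integral_re (hint p)
  rw [integral_ball_div_sub (hL p hp)] at hre
  refine hre.trans ?_
  simp [← Complex.ofReal_pow]

theorem sq_mul_one_sub_sq_norm_le {l : ℝ} (hl : 0 ≤ l) (p : ℂ) :
    l ^ 2 * (1 - ‖p‖ ^ 2) ≤ ∫ w in openSquare l p, (1 - ‖w‖ ^ 2 + l ^ 2) := by
  have hint {f : ℂ → ℝ} (hf : Continuous f) : IntegrableOn f (openSquare l p) :=
    integrableOn_of_continuous_of_isBounded hf (isBounded_openSquare l p)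
  have hlinear : ∫ w in openSquare l p, inner ℝ p (w - p) = 0 := by
    rw [integral_inner (integrableOn_of_continuous_of_isBounded (by fun_prop)
      (isBounded_openSquare l p)), integral_openSquare_sub_center, inner_zero_right]
  have hexpand : ∀ w ∈ openSquare l p,
      1 - ‖p‖ ^ 2 - 2 * inner ℝ p (w - p) ≤ 1 - ‖w‖ ^ 2 + l ^ 2 := fun w hw => by
    have hwp := mem_ball_iff_norm.1 (openSquare_subset_ball l p hw)
    have hnorm := norm_add_sq_real p (w - p)
    rw [add_sub_cancel] at hnorm
    nlinarith [norm_nonneg (w - p)]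
  calc l ^ 2 * (1 - ‖p‖ ^ 2) = ∫ w in openSquare l p, (1 - ‖p‖ ^ 2 - 2 * inner ℝ p (w - p)) := by
        rw [integral_sub (hint (by fun_prop)) (hint (by fun_prop)), integral_const_mul, hlinear,
          setIntegral_const, measureReal_openSquare p hl, smul_eq_mul, mul_zero, sub_zero]
    _ ≤ ∫ w in openSquare l p, (1 - ‖w‖ ^ 2 + l ^ 2) :=
        setIntegral_mono_on (hint (by fun_prop)) (hint (by fun_prop)) (measurableSet_openSquare l p)
          hexpand

section Holes

variable {ρ : ℝ} {L : Finset ℂ}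

/-- The removed part of the unit disc. -/
def vortexHoles (ρ : ℝ) (L : Finset ℂ) : Set ℂ := Metric.ball 0 1 ∩ ⋃ p ∈ L, Metric.ball p ρ

theorem vortexHoles_subset_ball (ρ : ℝ) (L : Finset ℂ) : vortexHoles ρ L ⊆ Metric.ball 0 1 :=
  Set.inter_subset_left

theorem measurableSet_vortexHoles (ρ : ℝ) (L : Finset ℂ) : MeasurableSet (vortexHoles ρ L) :=
  measurableSet_ball.inter (measurableSet_biUnion_ball ρ L)

theorem integral_perforatedDisc {f : ℂ → ℝ} (hf : IntegrableOn f (Metric.ball 0 1)) (ρ : ℝ)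
    (L : Finset ℂ) : ∫ z in perforatedDisc ρ L, f z =
      (∫ z in Metric.ball 0 1, f z) - ∫ z in vortexHoles ρ L, f z :=
  eq_sub_of_add_eq' (integral_inter_add_sdiff (measurableSet_biUnion_ball ρ L) hf)

theorem measureReal_vortexHoles_le_card_mul (hρ : 0 ≤ ρ) (L : Finset ℂ) :
    volume.real (vortexHoles ρ L) ≤ L.card * (π * ρ ^ 2) := by
  have hfinite : volume (⋃ p ∈ L, Metric.ball p ρ) ≠ ⊤ :=
    (measure_biUnion_lt_top L.finite_toSet fun _ _ => measure_ball_lt_top).ne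
  calc volume.real (vortexHoles ρ L) ≤ volume.real (⋃ p ∈ L, Metric.ball p ρ) :=
        measureReal_mono Set.inter_subset_right hfinite
    _ ≤ ∑ p ∈ L, volume.real (Metric.ball p ρ) := measureReal_biUnion_finset_le L _
    _ = L.card * (π * ρ ^ 2) := by simp [measureReal_ball _ hρ]

end Holes

namespace IsDiscTiling

variable {l ρ : ℝ} {L : Finset ℂ}

theorem sum_one_sub_sq_norm_le (h : IsDiscTiling l L) (hl : 0 ≤ l) :
    l ^ 2 * ∑ p ∈ L, (1 - ‖p‖ ^ 2) ≤ π / 2 + π * l ^ 2 := by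
  have hint {f : ℂ → ℝ} (hf : Continuous f) : IntegrableOn f (Metric.ball 0 1) :=
    integrableOn_of_continuous_of_isBounded hf Metric.isBounded_ball
  have hnonneg : ∀ᵐ w ∂volume.restrict (Metric.ball (0 : ℂ) 1), 0 ≤ 1 - ‖w‖ ^ 2 + l ^ 2 := by
    filter_upwards [ae_restrict_mem measurableSet_ball] with w hw
    nlinarith [mem_ball_zero_iff.1 hw, norm_nonneg w, sq_nonneg l]
  calc l ^ 2 * ∑ p ∈ L, (1 - ‖p‖ ^ 2)
      ≤ ∑ p ∈ L, ∫ w in openSquare l p, (1 - ‖w‖ ^ 2 + l ^ 2) := by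
        rw [Finset.mul_sum]
        exact Finset.sum_le_sum fun p _ => sq_mul_one_sub_sq_norm_le hl p
    _ ≤ ∫ w in Metric.ball 0 1, (1 - ‖w‖ ^ 2 + l ^ 2) :=
        h.sum_integral_openSquare_le subset_rfl h.subset_ball (hint (by fun_prop)) hnonneg
    _ = π / 2 + π * l ^ 2 := by
        rw [integral_add (hint (by fun_prop)) (hint (by fun_prop)),
          integral_sub (hint (by fun_prop)) (hint (by fun_prop)), integral_ball_zero_one_norm_sq]
        simp only [setIntegral_const, measureReal_ball 0 zero_le_one, smul_eq_mul]
        ring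

theorem measureReal_vortexHoles_le (h : IsDiscTiling l L) (hl : 0 < l) (hρ : 0 < ρ)
    (hρl : ρ ≤ l ^ 3) : volume.real (vortexHoles ρ L) ≤ π ^ 2 * l ^ 4 :=
  calc volume.real (vortexHoles ρ L) ≤ L.card * (π * ρ ^ 2) :=
        measureReal_vortexHoles_le_card_mul hρ.le L
    _ ≤ π / l ^ 2 * (π * (l ^ 3) ^ 2) := by
        gcongr
        exact h.card_le hl
    _ = π ^ 2 * l ^ 4 := by field_simp

theorem integral_vortexHoles_inv_norm_sub_le (h : IsDiscTiling l L) (hl : 0 < l) (hρ : 0 < ρ)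
    (hρl : ρ ≤ l ^ 3) (p : ℂ) :
    ∫ z in vortexHoles ρ L, ‖z - p‖⁻¹ ≤ (2 * π + π ^ 2) * l ^ 2 := by
  have hbdd := Metric.isBounded_ball.subset (vortexHoles_subset_ball ρ L)
  have hr : 0 < l ^ 2 := by positivity
  have htruncated : ∫ z in vortexHoles ρ L, (max (l ^ 2) ‖z - p‖)⁻¹ ≤ π ^ 2 * l ^ 2 := by
    calc ∫ z in vortexHoles ρ L, (max (l ^ 2) ‖z - p‖)⁻¹
        ≤ ∫ _ in vortexHoles ρ L, (l ^ 2)⁻¹ :=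
          integral_mono_of_nonneg (.of_forall fun z => by positivity)
            (integrableOn_const hbdd.measure_lt_top.ne)
            (.of_forall fun z => inv_anti₀ hr (le_max_left _ _))
      _ = volume.real (vortexHoles ρ L) * (l ^ 2)⁻¹ := setIntegral_const _
      _ ≤ π ^ 2 * l ^ 4 * (l ^ 2)⁻¹ := by
          gcongr
          exact h.measureReal_vortexHoles_le hl hρ hρl
      _ = π ^ 2 * l ^ 2 := by field_simp
  linarith [setIntegral_inv_norm_sub_le_add hr p hbdd (measurableSet_vortexHoles ρ L)]

theorem neg_le_integral_vortexHoles (h : IsDiscTiling l L) (hl : 0 < l) (hρ : 0 < ρ)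
    (hρl : ρ ≤ l ^ 3) :
    -(2 * π ^ 2 + π ^ 3) ≤ ∫ z in vortexHoles ρ L, (z * vortexField L z).re := by
  have hbdd := Metric.isBounded_ball.subset (vortexHoles_subset_ball ρ L)
  have hint (p : ℂ) := integrableOn_inv_norm_sub p hbdd
  have hsum : ∫ z in vortexHoles ρ L, ∑ p ∈ L, ‖z - p‖⁻¹ ≤ 2 * π ^ 2 + π ^ 3 := by
    rw [integral_finsetSum L fun p _ => hint p]
    calc ∑ p ∈ L, ∫ z in vortexHoles ρ L, ‖z - p‖⁻¹
        ≤ L.card • ((2 * π + π ^ 2) * l ^ 2) :=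
          Finset.sum_le_card_nsmul _ _ _ fun p _ =>
            h.integral_vortexHoles_inv_norm_sub_le hl hρ hρl p
      _ ≤ π / l ^ 2 * ((2 * π + π ^ 2) * l ^ 2) := by
          rw [nsmul_eq_mul]
          gcongr
          exact h.card_le hl
      _ = 2 * π ^ 2 + π ^ 3 := by field_simp
  have hnorm : ∀ z ∈ vortexHoles ρ L, -∑ p ∈ L, ‖z - p‖⁻¹ ≤ (z * vortexField L z).re :=
    fun z hz => by
    rw [re_mul_vortexField, ← Finset.sum_neg_distrib]
    refine Finset.sum_le_sum fun p _ =>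
      (neg_le_neg ?_).trans (neg_le_of_abs_le (Complex.abs_re_le_norm _))
    rw [norm_div, div_eq_mul_inv]
    exact mul_le_of_le_one_left (by positivity)
      (mem_ball_zero_iff.1 (vortexHoles_subset_ball ρ L hz)).le
  calc -(2 * π ^ 2 + π ^ 3) ≤ ∫ z in vortexHoles ρ L, -∑ p ∈ L, ‖z - p‖⁻¹ := by
        rw [integral_neg]
        exact neg_le_neg hsum
    _ ≤ ∫ z in vortexHoles ρ L, (z * vortexField L z).re :=
        setIntegral_mono_on (integrable_finsetSum L fun p _ => hint p).neg
          (integrableOn_re_mul_vortexField L hbdd) (measurableSet_vortexHoles ρ L) hnorm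

theorem integral_perforatedDisc_re_mul_vortexField_le (h : IsDiscTiling l L) (hl : 0 < l)
    (hρ : 0 < ρ) (hρl : ρ ≤ l ^ 3) :
    l ^ 2 * ∫ z in perforatedDisc ρ L, (z * vortexField L z).re ≤
      π ^ 2 / 2 + (3 * π ^ 2 + π ^ 3) * l ^ 2 := by
  rw [integral_perforatedDisc (integrableOn_re_mul_vortexField L Metric.isBounded_ball),
    integral_ball_re_mul_vortexField fun p hp => h.norm_lt_one hl hp]
  nlinarith [mul_le_mul_of_nonneg_left (h.sum_one_sub_sq_norm_le hl.le) pi_pos.le,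
    mul_le_mul_of_nonneg_left (h.neg_le_integral_vortexHoles hl hρ hρl) (sq_nonneg l)]

theorem le_integral_perforatedDisc_norm_sq (h : IsDiscTiling l L) (hl : 0 < l) (hρ : 0 < ρ)
    (hρl : ρ ≤ l ^ 3) :
    π / 2 - π ^ 2 * l ^ 4 ≤ ∫ z in perforatedDisc ρ L, ‖z‖ ^ 2 := by
  have hint : IntegrableOn (fun z : ℂ => ‖z‖ ^ 2) (Metric.ball 0 1) :=
    integrableOn_of_continuous_of_isBounded (by fun_prop) Metric.isBounded_ball
  have hholes : ∫ z in vortexHoles ρ L, ‖z‖ ^ 2 ≤ π ^ 2 * l ^ 4 := by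
    calc ∫ z in vortexHoles ρ L, ‖z‖ ^ 2 ≤ ∫ z in vortexHoles ρ L, 1 :=
          setIntegral_mono_on (hint.mono_set (vortexHoles_subset_ball ρ L))
            (integrableOn_const (Metric.isBounded_ball.subset
              (vortexHoles_subset_ball ρ L)).measure_lt_top.ne)
            (measurableSet_vortexHoles ρ L) fun z hz => pow_le_one₀ (norm_nonneg z)
              (mem_ball_zero_iff.1 (vortexHoles_subset_ball ρ L hz)).le
      _ = volume.real (vortexHoles ρ L) := by simp
      _ ≤ π ^ 2 * l ^ 4 := h.measureReal_vortexHoles_le hl hρ hρl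
  rw [integral_perforatedDisc hint, integral_ball_zero_one_norm_sq]
  linarith

theorem integrableOn_sq_norm_vortexField (h : IsDiscTiling l L) (hl : 0 < l) (hρ : 0 < ρ) :
    IntegrableOn (fun z => ‖vortexField L z‖ ^ 2) (perforatedDisc ρ L) := by
  have hbdd := Metric.isBounded_ball.subset (perforatedDisc_subset_ball ρ L)
  have hsum := ((h.integrableOn_sq_norm_fieldError hl hρ).add
    ((integrableOn_re_mul_vortexField L hbdd).const_mul (2 * π * l ^ 2))).sub
    ((integrableOn_of_continuous_of_isBounded (f := fun z : ℂ => ‖z‖ ^ 2) (by fun_prop)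
      hbdd).const_mul (π ^ 2))
  refine (hsum.const_mul (l ^ 4)⁻¹).congr (.of_forall fun z => ?_)
  simp only [Pi.add_apply, Pi.sub_apply]
  rw [inv_mul_eq_iff_eq_mul₀ (by positivity), pow_four_mul_sq_norm_vortexField]

theorem pow_four_mul_integral_sq_norm_vortexField (h : IsDiscTiling l L) (hl : 0 < l)
    (hρ : 0 < ρ) :
    l ^ 4 * ∫ z in perforatedDisc ρ L, ‖vortexField L z‖ ^ 2 =
      (∫ z in perforatedDisc ρ L, ‖fieldError l L z‖ ^ 2) +
        2 * π * (l ^ 2 * ∫ z in perforatedDisc ρ L, (z * vortexField L z).re) -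
        π ^ 2 * ∫ z in perforatedDisc ρ L, ‖z‖ ^ 2 := by
  have hbdd := Metric.isBounded_ball.subset (perforatedDisc_subset_ball ρ L)
  have hcross := (integrableOn_re_mul_vortexField L hbdd).const_mul (2 * π * l ^ 2)
  have hsq := (integrableOn_of_continuous_of_isBounded (μ := volume) (f := fun z : ℂ => ‖z‖ ^ 2)
    (by fun_prop) hbdd).const_mul (π ^ 2)
  have herr := h.integrableOn_sq_norm_fieldError hl hρ
  rw [← integral_const_mul]
  simp only [pow_four_mul_sq_norm_vortexField]
  rw [integral_sub (by exact herr.add hcross) hsq, integral_add herr hcross, integral_const_mul,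
    integral_const_mul, mul_assoc (2 * π)]

theorem integral_sq_norm_vortexField_le (h : IsDiscTiling l L) (hl : 0 < l) (hl16 : l ≤ 1 / 16)
    (hρ : 0 < ρ) (hρl : ρ ≤ l ^ 3) :
    ∫ z in perforatedDisc ρ L, ‖vortexField L z‖ ^ 2 ≤
      π ^ 3 / (2 * l ^ 4) + 1300 * π ^ 3 * log ρ⁻¹ / l ^ 2 := by
  have hl2 : l ^ 2 ≤ 1 := pow_le_one₀ hl.le (by linarith)
  have hone : 1 ≤ log ρ⁻¹ := one_le_log_inv hρ (by nlinarith)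
  have hlower : (6 * π ^ 3 + 2 * π ^ 4) * l ^ 2 + π ^ 4 * l ^ 4 ≤
      100 * π ^ 3 * l ^ 2 * log ρ⁻¹ :=
    calc (6 * π ^ 3 + 2 * π ^ 4) * l ^ 2 + π ^ 4 * l ^ 4
        = π ^ 3 * l ^ 2 * (6 + 2 * π + π * l ^ 2) := by ring
      _ ≤ π ^ 3 * l ^ 2 * (100 * log ρ⁻¹) := by
        gcongr
        nlinarith [pi_le_four, pi_pos]
      _ = 100 * π ^ 3 * l ^ 2 * log ρ⁻¹ := by ring
  have hscaled : l ^ 4 * ∫ z in perforatedDisc ρ L, ‖vortexField L z‖ ^ 2 ≤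
      π ^ 3 / 2 + 1300 * π ^ 3 * l ^ 2 * log ρ⁻¹ := by
    rw [h.pow_four_mul_integral_sq_norm_vortexField hl hρ]
    linarith [h.integral_sq_norm_fieldError_le hl hl16 hρ hρl,
      mul_le_mul_of_nonneg_left (h.integral_perforatedDisc_re_mul_vortexField_le hl hρ hρl)
        (mul_nonneg zero_le_two pi_pos.le),
      mul_le_mul_of_nonneg_left (h.le_integral_perforatedDisc_norm_sq hl hρ hρl) (sq_nonneg π)]
  calc ∫ z in perforatedDisc ρ L, ‖vortexField L z‖ ^ 2
      ≤ (π ^ 3 / 2 + 1300 * π ^ 3 * l ^ 2 * log ρ⁻¹) / l ^ 4 :=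
        (le_div_iff₀' (by positivity)).2 hscaled
    _ = π ^ 3 / (2 * l ^ 4) + 1300 * π ^ 3 * log ρ⁻¹ / l ^ 2 := by field_simp

end IsDiscTiling

/-! ### The gradient of the lattice phase -/

theorem hasFDerivAt_div_norm {u₀ : ℂ} (hu₀ : u₀ ≠ 0) :
    HasFDerivAt (fun u : ℂ => u / ‖u‖)
      ((u₀ / ‖u₀‖ * Complex.I) •
        Complex.ofRealCLM.comp (Complex.imCLM.comp (u₀⁻¹ • (1 : ℂ →L[ℝ] ℂ)))) u₀ := by
  have hlog : HasDerivAt (fun u : ℂ => Complex.log (u / u₀)) u₀⁻¹ u₀ := by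
    simpa [hu₀] using ((hasDerivAt_id u₀).div_const u₀).clog (by simp [hu₀])
  have hphase := ((Complex.ofRealCLM.hasFDerivAt.comp u₀ (Complex.imCLM.hasFDerivAt.comp u₀
    hlog.complexToReal_fderiv)).const_mul Complex.I).cexp.const_mul (u₀ / ‖u₀‖)
  have hpolar : (fun u : ℂ => u / ‖u‖) =ᶠ[nhds u₀] fun u =>
      u₀ / ‖u₀‖ * Complex.exp (Complex.I * (Complex.log (u / u₀)).im) := by
    filter_upwards [isOpen_ne.mem_nhds hu₀] with u hu
    have hexp : Complex.exp (Complex.I * (Complex.log (u / u₀)).im) = u / u₀ / ‖u / u₀‖ := by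
      rw [Complex.log_im, eq_div_iff (by simp [hu, hu₀]), mul_comm, mul_comm Complex.I,
        Complex.norm_mul_exp_arg_mul_I]
    have hnorm : (‖u₀‖ : ℂ) ≠ 0 := by simpa using hu₀
    rw [hexp, norm_div, Complex.ofReal_div]
    field_simp
  refine (hphase.congr_of_eventuallyEq hpolar).congr_fderiv ?_
  ext1
  simp [hu₀]
  ring

/-- The map `toC` as a linear isometry. -/
def toCIsometry : Pt ≃ₗᵢ[ℝ] ℂ := Complex.orthonormalBasisOneI.repr.symm

theorem toCIsometry_apply (x : Pt) : toCIsometry x = toC x :=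
  Complex.orthonormalBasisOneI_repr_symm_apply x

theorem norm_toC_sub_toC (x p : Pt) : ‖toC x - toC p‖ = ‖x - p‖ := by
  simp only [← toCIsometry_apply, ← map_sub, LinearIsometryEquiv.norm_map]

theorem toC_sub_toC_ne_zero {x p : Pt} (h : x ≠ p) : toC x - toC p ≠ 0 := by
  rwa [← norm_ne_zero_iff, norm_toC_sub_toC, norm_ne_zero_iff, sub_ne_zero]

/-- The real-linear form `v ↦ Im (s v)`, with values embedded in `ℂ`. It is the differential of a
phase `arg u` when `s` is the logarithmic derivative of `u`. -/
def imMulToC (s : ℂ) : Pt →L[ℝ] ℂ :=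
  Complex.ofRealCLM.comp
    (Complex.imCLM.comp (s • (toCIsometry.toContinuousLinearEquiv : Pt →L[ℝ] ℂ)))

theorem imMulToC_apply (s : ℂ) (v : Pt) : imMulToC s v = ((s * toC v).im : ℂ) := by
  rw [← toCIsometry_apply]
  rfl

theorem imMulToC_zero : imMulToC 0 = 0 := by
  ext v
  simp [imMulToC_apply]

theorem imMulToC_add (s t : ℂ) : imMulToC (s + t) = imMulToC s + imMulToC t := by
  ext v
  simp [imMulToC_apply, add_mul]

/-- The unit phase field of finitely many vortices of degree one. -/
def vortexPhase (M : Finset Pt) (x : Pt) : ℂ := ∏ p ∈ M, (toC x - toC p) / ((‖x - p‖ : ℝ) : ℂ)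

theorem norm_vortexPhase {M : Finset Pt} {x : Pt} (hx : x ∉ M) : ‖vortexPhase M x‖ = 1 := by
  rw [vortexPhase, norm_prod]
  refine Finset.prod_eq_one fun p hp => ?_
  have hxp : x ≠ p := fun h => hx (h ▸ hp)
  rw [norm_div, Complex.norm_real, norm_norm, norm_toC_sub_toC,
    div_self (norm_ne_zero_iff.2 (sub_ne_zero.2 hxp))]

theorem hasFDerivAt_phase_factor {p x : Pt} (h : x ≠ p) :
    HasFDerivAt (fun x : Pt => (toC x - toC p) / ((‖x - p‖ : ℝ) : ℂ))
      (((toC x - toC p) / ((‖x - p‖ : ℝ) : ℂ) * Complex.I) • imMulToC (toC x - toC p)⁻¹) x := by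
  have htoC : HasFDerivAt (fun y : Pt => toC y - toC p)
      (toCIsometry.toContinuousLinearEquiv : Pt →L[ℝ] ℂ) x := by
    simp only [← toCIsometry_apply]
    exact toCIsometry.toContinuousLinearEquiv.hasFDerivAt.sub_const _
  simp only [← norm_toC_sub_toC]
  exact (hasFDerivAt_div_norm (toC_sub_toC_ne_zero h)).comp x htoC

theorem hasFDerivAt_vortexPhase {M : Finset Pt} {x : Pt} (hx : x ∉ M) :
    HasFDerivAt (vortexPhase M)
      ((vortexPhase M x * Complex.I) • imMulToC (∑ p ∈ M, (toC x - toC p)⁻¹)) x := by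
  classical
  induction M using Finset.induction_on with
  | empty =>
    rw [Finset.sum_empty, imMulToC_zero]
    exact (hasFDerivAt_const (1 : ℂ) x).congr_fderiv (by ext; simp)
  | insert q M hq ih =>
    obtain ⟨hxq, hxM⟩ := not_or.1 (Finset.mem_insert.not.1 hx)
    have hinsert : vortexPhase (insert q M) =
        (fun y => (toC y - toC q) / ((‖y - q‖ : ℝ) : ℂ)) * vortexPhase M :=
      funext fun y => Finset.prod_insert hq
    rw [hinsert, Finset.sum_insert hq, imMulToC_add]
    refine ((hasFDerivAt_phase_factor hxq).mul (ih hxM)).congr_fderiv ?_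
    rw [smul_smul, smul_smul, smul_add, add_comm, Pi.mul_apply]
    congr 2 <;> ring

theorem sq_norm_pd1_add_sq_norm_pd2_vortexPhase {M : Finset Pt} {x : Pt} (hx : x ∉ M) :
    ‖pd1 (vortexPhase M) x‖ ^ 2 + ‖pd2 (vortexPhase M) x‖ ^ 2 =
      ‖∑ p ∈ M, (toC x - toC p)⁻¹‖ ^ 2 := by
  rw [pd1, pd2, (hasFDerivAt_vortexPhase hx).fderiv]
  generalize ∑ p ∈ M, (toC x - toC p)⁻¹ = s
  rw [← Complex.normSq_eq_norm_sq s, Complex.normSq_apply]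
  simp [imMulToC_apply, toC, norm_vortexPhase hx]
  ring

theorem finite_latt {l : ℝ} (hl : 0 < l) : (latt l).Finite := by
  set K : ℤ := ⌈1 / l⌉
  have hbound (m : ℤ) (h : |m * l| ≤ 1) : m ∈ Set.Icc (-K) K := by
    rw [abs_mul, abs_of_pos hl, ← le_div_iff₀ hl] at h
    exact_mod_cast abs_le.1 (h.trans (Int.le_ceil _))
  refine (((Set.finite_Icc (-K) K).prod (Set.finite_Icc (-K) K)).image
    fun q : ℤ × ℤ => (!₂[q.1 * l, q.2 * l] : Pt)).subset ?_
  rintro p ⟨⟨m, hm⟩, ⟨n, hn⟩, hp⟩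
  have hp1 : ‖p‖ ≤ 1 := hp.trans (sub_le_self 1 (by positivity))
  refine ⟨(m, n), ⟨hbound m ?_, hbound n ?_⟩, ?_⟩
  · exact hm ▸ (PiLp.norm_apply_le p 0).trans hp1
  · exact hn ▸ (PiLp.norm_apply_le p 1).trans hp1
  · ext i
    fin_cases i <;> simp [hm, hn]

open Classical in
/-- The truncated lattice `latt l`, seen in the complex plane. -/
def complexLatt {l : ℝ} (hl : 0 < l) : Finset ℂ := (finite_latt hl).toFinset.image toCIsometry

section Lattice

variable {l : ℝ} (hl : 0 < l)
include hl

theorem gfun_eq_vortexPhase : gfun l = vortexPhase (finite_latt hl).toFinset :=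
  funext fun _ => finprod_mem_eq_finite_toFinset_prod _ _

theorem mem_complexLatt {p : ℂ} : p ∈ complexLatt hl ↔
    ((∃ m : ℤ, p.re = m * l) ∧ ∃ n : ℤ, p.im = n * l) ∧ ‖p‖ ≤ 1 - 2 * √2 * l := by
  obtain ⟨q, rfl⟩ := toCIsometry.surjective p
  rw [complexLatt, toCIsometry.injective.mem_finset_image, Set.Finite.mem_toFinset,
    LinearIsometryEquiv.norm_map, toCIsometry_apply]
  simp [latt, toC, and_assoc]

theorem isDiscTiling_complexLatt (hl4 : 4 * l ≤ 1) : IsDiscTiling l (complexLatt hl) :=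
  isDiscTiling_lattice hl hl4 fun _ => mem_complexLatt hl

theorem lambdaSet_eq_preimage (ρ : ℝ) :
    lambdaSet l ρ = toCIsometry ⁻¹' perforatedDisc ρ (complexLatt hl) := by
  ext x
  simp [lambdaSet, B1, perforatedDisc, complexLatt]

theorem sq_norm_pd1_add_sq_norm_pd2_gfun {x : Pt} (hx : x ∉ latt l) :
    ‖pd1 (gfun l) x‖ ^ 2 + ‖pd2 (gfun l) x‖ ^ 2 =
      ‖vortexField (complexLatt hl) (toCIsometry x)‖ ^ 2 := by
  rw [gfun_eq_vortexPhase hl, sq_norm_pd1_add_sq_norm_pd2_vortexPhase (by simpa using hx),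
    vortexField, complexLatt, Finset.sum_image toCIsometry.injective.injOn]
  simp only [toCIsometry_apply]

theorem measurableSet_lambdaSet (ρ : ℝ) : MeasurableSet (lambdaSet l ρ) := by
  rw [lambdaSet_eq_preimage hl]
  exact toCIsometry.continuous.measurable (measurableSet_perforatedDisc ρ _)

theorem sq_grad_gfun_eqOn_lambdaSet {ρ : ℝ} (hρ : 0 < ρ) :
    Set.EqOn (fun x => ‖pd1 (gfun l) x‖ ^ 2 + ‖pd2 (gfun l) x‖ ^ 2)
      (fun x => ‖vortexField (complexLatt hl) (toCIsometry x)‖ ^ 2) (lambdaSet l ρ) := fun _ hx =>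
  sq_norm_pd1_add_sq_norm_pd2_gfun hl fun hxl =>
    hx.2 (Set.mem_biUnion hxl (Metric.mem_ball_self hρ))

theorem integral_lambdaSet_sq_grad_gfun {ρ : ℝ} (hρ : 0 < ρ) :
    ∫ x in lambdaSet l ρ, (‖pd1 (gfun l) x‖ ^ 2 + ‖pd2 (gfun l) x‖ ^ 2) =
      ∫ z in perforatedDisc ρ (complexLatt hl), ‖vortexField (complexLatt hl) z‖ ^ 2 := by
  rw [setIntegral_congr_fun (measurableSet_lambdaSet hl ρ) (sq_grad_gfun_eqOn_lambdaSet hl hρ),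
    lambdaSet_eq_preimage hl, toCIsometry.measurePreserving.setIntegral_preimage_emb
      toCIsometry.toHomeomorph.measurableEmbedding fun z => ‖vortexField (complexLatt hl) z‖ ^ 2]

theorem integrableOn_lambdaSet_sq_grad_gfun {ρ : ℝ} (hl4 : 4 * l ≤ 1) (hρ : 0 < ρ) :
    IntegrableOn (fun x => ‖pd1 (gfun l) x‖ ^ 2 + ‖pd2 (gfun l) x‖ ^ 2) (lambdaSet l ρ) := by
  rw [integrableOn_congr_fun (sq_grad_gfun_eqOn_lambdaSet hl hρ) (measurableSet_lambdaSet hl ρ),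
    lambdaSet_eq_preimage hl]
  exact (toCIsometry.measurePreserving.integrableOn_comp_preimage
    toCIsometry.toHomeomorph.measurableEmbedding).2
    ((isDiscTiling_complexLatt hl hl4).integrableOn_sq_norm_vortexField hl hρ)

end Lattice

theorem lambdaSet_antitone (l : ℝ) : Antitone (lambdaSet l) := fun _ _ h =>
  Set.sdiff_subset_sdiff_right (Set.iUnion₂_mono fun _ _ => Metric.ball_subset_ball h)

theorem integral_lambdaSet_sq_grad_gfun_le {l ρ : ℝ} (hl : 0 < l) (hl16 : l ≤ 1 / 16)
    (hρ : 0 < ρ) (hρl : ρ ≤ l ^ 3) :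
    ∫ x in lambdaSet l ρ, (‖pd1 (gfun l) x‖ ^ 2 + ‖pd2 (gfun l) x‖ ^ 2) ≤
      π ^ 3 / (2 * l ^ 4) + 1300 * π ^ 3 * log ρ⁻¹ / l ^ 2 := by
  rw [integral_lambdaSet_sq_grad_gfun hl hρ]
  exact (isDiscTiling_complexLatt hl (by linarith)).integral_sq_norm_vortexField_le hl hl16 hρ hρl

theorem integral_lambdaSet_rpow_sq_grad_gfun_le {δ ε : ℝ} (η : ℝ) (hδ : 0 < δ) (hε : 0 < ε)
    (hε1 : ε ≤ 1) (hε256 : ε ≤ 1 / (256 * δ ^ 2)) (hεδ : ε ≤ δ ^ 2) :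
    ∫ x in lambdaSet (δ * √ε) (ε ^ η),
        (‖pd1 (gfun (δ * √ε)) x‖ ^ 2 + ‖pd2 (gfun (δ * √ε)) x‖ ^ 2) ≤
      π ^ 3 / (2 * δ ^ 4 * ε ^ 2) + 1300 * π ^ 3 * max η 3 / δ ^ 2 * |log ε| / ε := by
  have hl : 0 < δ * √ε := by positivity
  have hl2 : (δ * √ε) ^ 2 = δ ^ 2 * ε := by rw [mul_pow, sq_sqrt hε.le]
  have hl4 : (δ * √ε) ^ 4 = δ ^ 4 * ε ^ 2 := by rw [pow_mul _ 2 2, hl2]; ring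
  have hl16 : δ * √ε ≤ 1 / 16 := by
    rw [le_div_iff₀ (by positivity)] at hε256
    exact le_of_sq_le_sq (by linarith) (by norm_num)
  have hεl : ε ≤ δ * √ε := by
    calc ε = √ε * √ε := (mul_self_sqrt hε.le).symm
      _ ≤ δ * √ε := by
        gcongr
        exact sqrt_le_iff.2 ⟨hδ.le, hεδ⟩
  have hρ : 0 < ε ^ max η 3 := rpow_pos_of_pos hε _
  have hρl : ε ^ max η 3 ≤ (δ * √ε) ^ 3 := by
    calc ε ^ max η 3 ≤ ε ^ (3 : ℝ) := rpow_le_rpow_of_exponent_ge hε hε1 (le_max_right η 3)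
      _ = ε ^ 3 := rpow_ofNat ε 3
      _ ≤ (δ * √ε) ^ 3 := by gcongr
  have hlog : log (ε ^ max η 3)⁻¹ = max η 3 * |log ε| := by
    rw [log_inv, log_rpow hε, abs_of_nonpos (log_nonpos hε.le hε1), mul_neg]
  calc ∫ x in lambdaSet (δ * √ε) (ε ^ η),
        (‖pd1 (gfun (δ * √ε)) x‖ ^ 2 + ‖pd2 (gfun (δ * √ε)) x‖ ^ 2)
      ≤ ∫ x in lambdaSet (δ * √ε) (ε ^ max η 3),
        (‖pd1 (gfun (δ * √ε)) x‖ ^ 2 + ‖pd2 (gfun (δ * √ε)) x‖ ^ 2) :=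
        setIntegral_mono_set (integrableOn_lambdaSet_sq_grad_gfun hl (by linarith) hρ)
          (.of_forall fun x => by positivity) (lambdaSet_antitone _
            (rpow_le_rpow_of_exponent_ge hε hε1 (le_max_left η 3))).eventuallyLE
    _ ≤ π ^ 3 / (2 * (δ * √ε) ^ 4) + 1300 * π ^ 3 * log (ε ^ max η 3)⁻¹ / (δ * √ε) ^ 2 :=
        integral_lambdaSet_sq_grad_gfun_le hl hl16 hρ hρl
    _ = π ^ 3 / (2 * δ ^ 4 * ε ^ 2) + 1300 * π ^ 3 * max η 3 / δ ^ 2 * |log ε| / ε := by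
        rw [hl2, hl4, hlog]
        field_simp

theorem stmt14_general (δ η : ℝ) (hδ : 0 < δ) :
    ∃ (C ε₀ : ℝ), 0 < ε₀ ∧ ∀ ε : ℝ, 0 < ε → ε < ε₀ →
      (∫ x in lambdaSet (δ * Real.sqrt ε) (ε ^ η),
        (‖pd1 (gfun (δ * Real.sqrt ε)) x‖ ^ 2 + ‖pd2 (gfun (δ * Real.sqrt ε)) x‖ ^ 2)) ≤
      π ^ 3 / (2 * δ ^ 4 * ε ^ 2) + C * |Real.log ε| / ε := by
  refine ⟨1300 * π ^ 3 * max η 3 / δ ^ 2, min 1 (min (1 / (256 * δ ^ 2)) (δ ^ 2)), by positivity,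
    fun ε hε hε₀ => ?_⟩
  obtain ⟨hε1, hε256, hεδ⟩ : ε < 1 ∧ ε < 1 / (256 * δ ^ 2) ∧ ε < δ ^ 2 := by
    simpa only [lt_min_iff] using hε₀
  exact integral_lambdaSet_rpow_sq_grad_gfun_le η hδ hε hε1.le hε256.le hεδ.le

theorem stmt14 (δ η : ℝ) (hδ : 0 < δ) (hη : 5 / 2 < η) :
    ∃ (C ε₀ : ℝ), 0 < ε₀ ∧ ∀ ε : ℝ, 0 < ε → ε < ε₀ →
      (∫ x in lambdaSet (δ * Real.sqrt ε) (ε ^ η),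
        (‖pd1 (gfun (δ * Real.sqrt ε)) x‖ ^ 2 + ‖pd2 (gfun (δ * Real.sqrt ε)) x‖ ^ 2)) ≤
      π ^ 3 / (2 * δ ^ 4 * ε ^ 2) + C * |Real.log ε| / ε :=
  stmt14_general δ η hδ
end
end

section
/- Fix Ω₁ > 0 and α > 0, and set Ω(ε) = Ω₁/ε^{1+α}. There exist constants C₁, C₂ (depending on Ω₁ and α) and ε₀ > 0 such that for all 0 < ε < ε₀, the GP ground-state energy satisfies E^TF_ε ≤ ε^{2+2α} · E^GP_{ε,Ω(ε)} ≤ E^TF_ε + C₁ ε^{2α} + C₂ ε² |log ε|, where E^TF_ε = −(Ω₁²/4)(1 − 8ε^α/(3√π Ω₁)). In particular ε^{2+2α} E^GP_{ε,Ω(ε)} → −Ω₁²/4 as ε → 0. -/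
open MeasureTheory Real Filter

noncomputable section

/-- Inner radius of the support of the TF minimizer in the rapid-rotation regime. -/
def Reps (Ω₁ α ε : ℝ) : ℝ := Real.sqrt (1 - 4 * ε ^ α / (Real.sqrt π * Ω₁))

/-- The TF minimizer in the rapid-rotation regime. -/
def rhoTFeps (Ω₁ α ε : ℝ) (x : Pt) : ℝ :=
  Ω₁ ^ 2 / (8 * ε ^ (2 * α)) * max 0 (‖x‖ ^ 2 - (Reps Ω₁ α ε) ^ 2)

/-- The TF functional of the rapid-rotation regime. -/
def tfEpsEnergy (Ω₁ α ε : ℝ) (ρ : Pt → ℝ) : ℝ :=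
  ε ^ (2 * α) * ∫ x in B1, ((ρ x) ^ 2 - Ω₁ ^ 2 * ‖x‖ ^ 2 * ρ x / (4 * ε ^ (2 * α)))

/-!
Completing the square in the rotating frame gives
`ε² E^GP[Ψ] = ε² ∫ |(∇ - iA)Ψ|² + E^TF[|Ψ|²]` with `A = (Ω / 2) x^⊥` and rotation speed `ε Ω` in the
Thomas–Fermi functional, so dropping the kinetic term gives the lower bound. For the upper bound,
the Euler–Lagrange equation of the Thomas–Fermi minimiser turns the excess energy of a density
supported in the annulus `‖x‖² ≥ 1 - δ`, `δ = 4 / (√π ε Ω)`, into its squared `L²` distance to the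
minimiser. The trial state is a giant vortex whose density agrees with the minimiser up to `O(1)`
and whose phase winds at the speed of rotation, so that it contributes `O(1)` to `ε² E^GP` as well;
the minimiser vanishes linearly at the inner edge, and regularising its square root there at scale
`δ²` costs the kinetic energy `(ε Ω)² log (1 / δ)`, which is the source of `|log ε|`.
-/

open scoped Topology

section Disc

theorem measurableSet_B1 : MeasurableSet B1 := measurableSet_ball

theorem volume_real_B1 : volume.real B1 = π := by
  simp [B1, Measure.real, EuclideanSpace.volume_ball_fin_two, pi_nonneg]

theorem norm_sq_lt_one_of_mem_B1 {x : Pt} (hx : x ∈ B1) : ‖x‖ ^ 2 < 1 :=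
  pow_lt_one₀ (norm_nonneg x) (mem_ball_zero_iff.1 hx) two_ne_zero

theorem norm_sq_eq_add_sq (x : Pt) : ‖x‖ ^ 2 = x 0 ^ 2 + x 1 ^ 2 := by
  simp [EuclideanSpace.norm_sq_eq, Fin.sum_univ_two]

theorem integrableOn_B1_of_continuous {E : Type*} [NormedAddCommGroup E] {f : Pt → E}
    (hf : Continuous f) : IntegrableOn f B1 :=
  (hf.continuousOn.integrableOn_compact (isCompact_closedBall 0 1)).mono_set
    Metric.ball_subset_closedBall

variable {E : Type*} [NormedAddCommGroup E] [NormedSpace ℝ E]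

theorem setIntegral_ball_comp_norm_sq (F : ℝ → E) {R : ℝ} (hR : 0 ≤ R) :
    ∫ x in Metric.ball (0 : Pt) R, F (‖x‖ ^ 2) = π • ∫ s in (0 : ℝ)..R ^ 2, F s := by
  have hdisc : ∫ x in Metric.ball (0 : Pt) R, F (‖x‖ ^ 2) =
      ∫ x : Pt, (Set.Iio (R ^ 2)).indicator F (‖x‖ ^ 2) := by
    rw [← integral_indicator measurableSet_ball]
    refine integral_congr_ae (.of_forall fun x => ?_)
    simp only [Set.indicator, mem_ball_zero_iff, Set.mem_Iio,
      pow_lt_pow_iff_left₀ (norm_nonneg x) hR two_ne_zero]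
  have hline : ∫ s in (0 : ℝ)..R ^ 2, F s = ∫ s in Set.Ioi 0, (Set.Iio (R ^ 2)).indicator F s := by
    rw [setIntegral_indicator measurableSet_Iio, Set.Ioi_inter_Iio,
      intervalIntegral.integral_of_le (sq_nonneg R), integral_Ioc_eq_integral_Ioo]
  have hsubst : ∫ r in Set.Ioi (0 : ℝ), (2 * r) • (Set.Iio (R ^ 2)).indicator F (r ^ 2) =
      ∫ s in Set.Ioi 0, (Set.Iio (R ^ 2)).indicator F s := by
    simpa [show (2 : ℝ) - 1 = 1 by norm_num] using
      integral_comp_rpow_Ioi_of_pos (g := (Set.Iio (R ^ 2)).indicator F) two_pos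
  rw [hdisc, hline, ← hsubst,
    integral_fun_norm_addHaar volume fun r : ℝ => (Set.Iio (R ^ 2)).indicator F (r ^ 2)]
  simp only [mul_smul, integral_smul, finrank_euclideanSpace, Fintype.card_fin, pow_one,
    Nat.reduceSub]
  rw [← B1, volume_real_B1, smul_comm, ← Nat.cast_smul_eq_nsmul ℝ, Nat.cast_ofNat]

theorem setIntegral_B1_comp_norm_sq_sub {F : ℝ → E} {δ : ℝ} (hδ₀ : 0 ≤ δ) (hδ₁ : δ ≤ 1)
    (hF : ∀ u ≤ 0, F u = 0) :
    ∫ x in B1, F (‖x‖ ^ 2 - (1 - δ)) = π • ∫ u in (0 : ℝ)..δ, F u := by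
  have htail : ∫ u in -(1 - δ)..δ, F u = ∫ u in (0 : ℝ)..δ, F u := by
    rw [intervalIntegral.integral_of_le (by linarith), intervalIntegral.integral_of_le hδ₀]
    refine setIntegral_eq_of_subset_of_forall_sdiff_eq_zero measurableSet_Ioc
      (Set.Ioc_subset_Ioc_left (by linarith)) fun u hu => hF u ?_
    exact not_lt.1 fun h => hu.2 ⟨h, hu.1.2⟩
  rw [B1, setIntegral_ball_comp_norm_sq (fun s => F (s - (1 - δ))) zero_le_one,
    intervalIntegral.integral_comp_sub_right, one_pow, sub_sub_cancel, zero_sub, htail]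

end Disc

theorem hasDerivAt_comp_max_zero {E : Type*} [NormedAddCommGroup E] [NormedSpace ℝ E]
    {G : ℝ → E} {d : E} {u : ℝ} (hG : HasDerivAt G d (max 0 u)) (hd : u ≤ 0 → d = 0) :
    HasDerivAt (fun v => G (max 0 v)) d u := by
  rcases lt_trichotomy u 0 with hu | rfl | hu
  · rw [hd hu.le]
    refine (hasDerivAt_const u (G 0)).congr_of_eventuallyEq ?_
    filter_upwards [gt_mem_nhds hu] with v hv
    rw [max_eq_left hv.le]
  · obtain rfl := hd le_rfl
    rw [hasDerivAt_iff_isLittleO] at hG ⊢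
    have hmax : Tendsto (fun v : ℝ => max 0 v) (𝓝 0) (𝓝 (max 0 0)) :=
      (continuous_const.max continuous_id).tendsto 0
    simp only [smul_zero, sub_zero] at hG ⊢
    refine (hG.comp_tendsto hmax).trans_le fun v => ?_
    simpa [max_comm] using abs_max_sub_max_le_abs v 0 0
  · rw [max_eq_right hu.le] at hG
    refine hG.congr_of_eventuallyEq ?_
    filter_upwards [lt_mem_nhds hu] with v hv
    rw [max_eq_right hv.le]

section EdgeProfile

/-- The `C¹` regularisation `u₊² / (u₊ + k)^{3/2}` of the square root `√u₊`: the modulus of the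
trial function near the inner edge of the Thomas–Fermi annulus, where `√u₊` itself has infinite
kinetic energy. -/
def edgeProfile (k u : ℝ) : ℝ := max 0 u ^ 2 / √(max 0 u + k) ^ 3

/-- The derivative of `edgeProfile k`. -/
def edgeSlope (k u : ℝ) : ℝ := max 0 u * (max 0 u + 4 * k) / (2 * √(max 0 u + k) ^ 5)

variable {k : ℝ}

theorem edgeProfile_of_nonpos (k : ℝ) {u : ℝ} (hu : u ≤ 0) : edgeProfile k u = 0 := by
  simp [edgeProfile, max_eq_left hu]

theorem edgeSlope_of_nonpos (k : ℝ) {u : ℝ} (hu : u ≤ 0) : edgeSlope k u = 0 := by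
  simp [edgeSlope, max_eq_left hu]

theorem hasDerivAt_sq_div_sqrt_add_pow_three {v : ℝ} (hv : 0 < v + k) :
    HasDerivAt (fun w => w ^ 2 / √(w + k) ^ 3) (v * (v + 4 * k) / (2 * √(v + k) ^ 5)) v := by
  have hq : 0 < √(v + k) := sqrt_pos.2 hv
  have hsq : √(v + k) ^ 2 = v + k := sq_sqrt hv.le
  have hsqrt : HasDerivAt (fun w => √(w + k)) (1 / (2 * √(v + k))) v :=
    ((hasDerivAt_id v).add_const k).sqrt hv.ne'
  refine ((hasDerivAt_pow 2 v).div (hsqrt.pow 3) (pow_ne_zero 3 hq.ne')).congr_deriv ?_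
  simp only [Pi.pow_apply]
  field_simp
  push_cast
  linear_combination (4 * v * √(v + k) ^ 2) * hsq

theorem hasDerivAt_edgeProfile (hk : 0 < k) (u : ℝ) :
    HasDerivAt (edgeProfile k) (edgeSlope k u) u :=
  hasDerivAt_comp_max_zero
    (hasDerivAt_sq_div_sqrt_add_pow_three (add_pos_of_nonneg_of_pos (le_max_left 0 u) hk))
    (edgeSlope_of_nonpos k)

theorem continuous_edgeProfile (hk : 0 < k) : Continuous (edgeProfile k) :=
  continuous_iff_continuousAt.2 fun u => (hasDerivAt_edgeProfile hk u).continuousAt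

theorem continuous_edgeSlope (hk : 0 < k) : Continuous (edgeSlope k) := by
  have hpos (u : ℝ) : 0 < max 0 u + k := add_pos_of_nonneg_of_pos (le_max_left 0 u) hk
  exact Continuous.div (by fun_prop) (by fun_prop) fun u =>
    (mul_pos two_pos (pow_pos (sqrt_pos.2 (hpos u)) 5)).ne'

theorem edgeProfile_sq (hk : 0 < k) (u : ℝ) :
    edgeProfile k u ^ 2 = max 0 u ^ 4 / (max 0 u + k) ^ 3 := by
  have h : 0 ≤ max 0 u + k := add_nonneg (le_max_left 0 u) hk.le
  rw [edgeProfile, div_pow, ← pow_mul, pow_right_comm, sq_sqrt h]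

theorem edgeProfile_sq_le (hk : 0 < k) (u : ℝ) : edgeProfile k u ^ 2 ≤ max 0 u := by
  rw [edgeProfile_sq hk, div_le_iff₀ (by positivity), pow_succ' _ 3]
  gcongr
  linarith

theorem sub_le_edgeProfile_sq (hk : 0 < k) (u : ℝ) :
    max 0 u - 3 * k ≤ edgeProfile k u ^ 2 := by
  rw [edgeProfile_sq hk, le_div_iff₀ (by positivity)]
  have : 0 ≤ 6 * max 0 u ^ 2 * k ^ 2 + 8 * max 0 u * k ^ 3 + 3 * k ^ 4 := by positivity
  linarith

theorem edgeSlope_sq_le_inv (hk : 0 < k) (u : ℝ) : edgeSlope k u ^ 2 ≤ (max 0 u + k)⁻¹ := by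
  have hpos : 0 < max 0 u + k := by positivity
  have hnum : max 0 u * (max 0 u + 4 * k) ≤ 2 * (max 0 u + k) ^ 2 := by
    linarith [sq_nonneg (max 0 u), sq_nonneg k]
  calc edgeSlope k u ^ 2
      = (max 0 u * (max 0 u + 4 * k)) ^ 2 / (4 * (max 0 u + k) ^ 5) := by
        rw [edgeSlope, div_pow, mul_pow 2, pow_right_comm, sq_sqrt hpos.le]
        norm_num
    _ ≤ (2 * (max 0 u + k) ^ 2) ^ 2 / (4 * (max 0 u + k) ^ 5) := by gcongr
    _ = (max 0 u + k)⁻¹ := by field_simp; norm_num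

theorem intervalIntegral_edgeSlope_sq_le (hk : 0 < k) {δ : ℝ} (hδ : 0 ≤ δ) :
    ∫ u in (0 : ℝ)..δ, edgeSlope k u ^ 2 ≤ log ((δ + k) / k) := by
  have hcont : ContinuousOn (fun u : ℝ => (u + k)⁻¹) (Set.uIcc 0 δ) := by
    rw [Set.uIcc_of_le hδ]
    exact ContinuousOn.inv₀ (by fun_prop) fun u hu => (add_pos_of_nonneg_of_pos hu.1 hk).ne'
  calc ∫ u in (0 : ℝ)..δ, edgeSlope k u ^ 2
      ≤ ∫ u in (0 : ℝ)..δ, (u + k)⁻¹ := by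
        refine intervalIntegral.integral_mono_on hδ
          ((continuous_edgeSlope hk).pow 2 |>.intervalIntegrable _ _)
          hcont.intervalIntegrable fun u hu => ?_
        simpa [max_eq_right hu.1] using edgeSlope_sq_le_inv hk u
    _ = log ((δ + k) / k) := by
        rw [intervalIntegral.integral_comp_add_right (fun u => u⁻¹) k, zero_add,
          integral_inv_of_pos hk (by positivity)]

theorem intervalIntegral_edgeProfile_sq_le (hk : 0 < k) {δ : ℝ} (hδ : 0 ≤ δ) :
    ∫ u in (0 : ℝ)..δ, edgeProfile k u ^ 2 ≤ δ ^ 2 / 2 := by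
  calc ∫ u in (0 : ℝ)..δ, edgeProfile k u ^ 2
      ≤ ∫ u in (0 : ℝ)..δ, u := by
        refine intervalIntegral.integral_mono_on hδ
          ((continuous_edgeProfile hk).pow 2 |>.intervalIntegrable _ _)
          (continuous_id.intervalIntegrable _ _) fun u hu => ?_
        simpa [max_eq_right hu.1] using edgeProfile_sq_le hk u
    _ = δ ^ 2 / 2 := by simp

theorem le_intervalIntegral_edgeProfile_sq (hk : 0 < k) {δ : ℝ} (hδ : 0 ≤ δ) :
    δ ^ 2 / 2 - 3 * k * δ ≤ ∫ u in (0 : ℝ)..δ, edgeProfile k u ^ 2 := by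
  calc δ ^ 2 / 2 - 3 * k * δ
      = ∫ u in (0 : ℝ)..δ, (u - 3 * k) := by
        rw [intervalIntegral.integral_sub (by simp) (by simp)]
        simp [mul_comm, mul_left_comm]
    _ ≤ ∫ u in (0 : ℝ)..δ, edgeProfile k u ^ 2 := by
        refine intervalIntegral.integral_mono_on hδ
          ((by fun_prop : Continuous fun u : ℝ => u - 3 * k).intervalIntegrable _ _)
          ((continuous_edgeProfile hk).pow 2 |>.intervalIntegrable _ _) fun u hu => ?_
        simpa [max_eq_right hu.1] using sub_le_edgeProfile_sq hk u

end EdgeProfile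

section ThomasFermi

/-- The width `1 - R₀²` of the Thomas–Fermi annulus in the variable `‖x‖²`, in the regime
`4 / √π < Ω₀` where the density has a hole. -/
def tfWidth (Ω₀ : ℝ) : ℝ := 4 / (√π * Ω₀)

variable {Ω₀ : ℝ}

theorem tfWidth_pos (hΩ : 0 < Ω₀) : 0 < tfWidth Ω₀ :=
  div_pos four_pos (mul_pos (sqrt_pos.2 pi_pos) hΩ)

theorem pi_mul_sq_mul_tfWidth_sq (hΩ : Ω₀ ≠ 0) : π * (Ω₀ ^ 2 * tfWidth Ω₀ ^ 2) = 16 := by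
  rw [tfWidth, div_pow, mul_pow, sq_sqrt pi_nonneg]
  field_simp
  norm_num

theorem rhoTF_eq_of_tfWidth_lt_one (hΩ : 0 < Ω₀) (hδ : tfWidth Ω₀ < 1) (x : Pt) :
    rhoTF Ω₀ x = Ω₀ ^ 2 / 8 * max 0 (‖x‖ ^ 2 - (1 - tfWidth Ω₀)) := by
  have hπ : 0 < √π := sqrt_pos.2 pi_pos
  have hlarge : ¬Ω₀ ≤ 4 / √π := by
    rw [not_le, div_lt_iff₀ hπ, mul_comm]
    exact (div_lt_one (by positivity)).1 hδ
  rw [rhoTF, if_neg hlarge, mul_max_of_nonneg _ _ (by positivity), mul_zero, tfWidth]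
  congr 1
  field_simp
  ring

theorem integral_rhoTF (hΩ : 0 < Ω₀) (hδ : tfWidth Ω₀ < 1) : ∫ x in B1, rhoTF Ω₀ x = 1 := by
  have hδ₀ := (tfWidth_pos hΩ).le
  have hline : ∫ u in (0 : ℝ)..tfWidth Ω₀, max 0 u = tfWidth Ω₀ ^ 2 / 2 := by
    rw [intervalIntegral.integral_congr (g := id) fun u hu => ?_]
    · simp
    · exact max_eq_right (Set.uIcc_of_le hδ₀ ▸ hu).1
  simp only [rhoTF_eq_of_tfWidth_lt_one hΩ hδ]
  rw [integral_const_mul, setIntegral_B1_comp_norm_sq_sub hδ₀ hδ.le fun u => max_eq_left, hline,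
    smul_eq_mul]
  linear_combination (1 / 16) * pi_mul_sq_mul_tfWidth_sq hΩ.ne'

theorem continuous_rhoTF (hΩ : 0 < Ω₀) (hδ : tfWidth Ω₀ < 1) : Continuous (rhoTF Ω₀) := by
  rw [funext (rhoTF_eq_of_tfWidth_lt_one hΩ hδ)]
  fun_prop

theorem tfEnergy_rhoTF (hΩ : 0 < Ω₀) (hδ : tfWidth Ω₀ < 1) :
    tfEnergy Ω₀ (rhoTF Ω₀) = -(Ω₀ ^ 2 / 4) * (1 - 2 / 3 * tfWidth Ω₀) := by
  have hδ₀ := (tfWidth_pos hΩ).le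
  have hpi := pi_mul_sq_mul_tfWidth_sq hΩ.ne'
  set δ := tfWidth Ω₀
  set F : ℝ → ℝ := fun u => (Ω₀ ^ 2 / 8 * max 0 u) ^ 2 -
    Ω₀ ^ 2 * (u + (1 - δ)) * (Ω₀ ^ 2 / 8 * max 0 u) / 4 with hF
  have hline : ∫ u in (0 : ℝ)..δ, F u = -(Ω₀ ^ 4 / 64) * (δ ^ 3 / 3 + (1 - δ) * δ ^ 2) := by
    rw [intervalIntegral.integral_congr
      (g := fun u => -(Ω₀ ^ 4 / 64) * (u ^ 2 + 2 * (1 - δ) * u)) fun u hu => ?_]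
    · rw [intervalIntegral.integral_const_mul,
        intervalIntegral.integral_add (by simp) (Continuous.intervalIntegrable (by fun_prop) _ _),
        integral_pow, intervalIntegral.integral_const_mul, integral_id]
      norm_num
      left
      ring
    · simp only [hF, max_eq_right (Set.uIcc_of_le hδ₀ ▸ hu).1]
      ring
  calc tfEnergy Ω₀ (rhoTF Ω₀)
      = ∫ x in B1, F (‖x‖ ^ 2 - (1 - δ)) := by
        simp only [tfEnergy, rhoTF_eq_of_tfWidth_lt_one hΩ hδ, hF, sub_add_cancel, δ]
    _ = π * (-(Ω₀ ^ 4 / 64) * (δ ^ 3 / 3 + (1 - δ) * δ ^ 2)) := by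
        rw [setIntegral_B1_comp_norm_sq_sub hδ₀ hδ.le fun u hu => by simp [hF, max_eq_left hu],
          hline, smul_eq_mul]
    _ = -(Ω₀ ^ 2 / 4) * (1 - 2 / 3 * δ) := by
        linear_combination (-(Ω₀ ^ 2 / 64) * (1 - 2 / 3 * δ)) * hpi

-- Since `rhoTF` solves the Euler–Lagrange equation, the first variation reduces to the multiplier
-- times the mass defect plus the slack of the constraint `0 ≤ ρ` in the hole.
theorem tfEnergy_integrand_eq (hΩ : 0 < Ω₀) (hδ : tfWidth Ω₀ < 1) (ρ : Pt → ℝ) (x : Pt) :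
    ρ x ^ 2 - Ω₀ ^ 2 * ‖x‖ ^ 2 * ρ x / 4 =
      (rhoTF Ω₀ x ^ 2 - Ω₀ ^ 2 * ‖x‖ ^ 2 * rhoTF Ω₀ x / 4) + (ρ x - rhoTF Ω₀ x) ^ 2 -
      Ω₀ ^ 2 / 4 * (1 - tfWidth Ω₀) * (ρ x - rhoTF Ω₀ x) +
      Ω₀ ^ 2 / 4 * (max 0 ((1 - tfWidth Ω₀) - ‖x‖ ^ 2) * ρ x) := by
  rw [rhoTF_eq_of_tfWidth_lt_one hΩ hδ]
  rcases le_total (‖x‖ ^ 2) (1 - tfWidth Ω₀) with h | h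
  · rw [max_eq_left (sub_nonpos.2 h), max_eq_right (sub_nonneg.2 h)]
    ring
  · rw [max_eq_right (sub_nonneg.2 h), max_eq_left (sub_nonpos.2 h)]
    ring

theorem tfEnergy_eq_tfEnergy_rhoTF_add (hΩ : 0 < Ω₀) (hδ : tfWidth Ω₀ < 1) {ρ : Pt → ℝ}
    (hρ : tfAdm ρ) :
    tfEnergy Ω₀ ρ = tfEnergy Ω₀ (rhoTF Ω₀) + (∫ x in B1, (ρ x - rhoTF Ω₀ x) ^ 2) +
      Ω₀ ^ 2 / 4 * ∫ x in B1, max 0 ((1 - tfWidth Ω₀) - ‖x‖ ^ 2) * ρ x := by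
  obtain ⟨hint, hint_sq, -, hmass⟩ := hρ
  have hcont := continuous_rhoTF hΩ hδ
  have hdiff : Integrable (fun x => ρ x - rhoTF Ω₀ x) (volume.restrict B1) :=
    hint.sub (integrableOn_B1_of_continuous hcont)
  have hdiff_sq : IntegrableOn (fun x => (ρ x - rhoTF Ω₀ x) ^ 2) B1 := by
    refine (memLp_two_iff_integrable_sq hdiff.aestronglyMeasurable).1 (MemLp.sub ?_ ?_)
    · exact (memLp_two_iff_integrable_sq hint.aestronglyMeasurable).2 hint_sq
    · exact (memLp_two_iff_integrable_sq hcont.aestronglyMeasurable).2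
        (integrableOn_B1_of_continuous (by fun_prop))
  have hTF : IntegrableOn (fun x => rhoTF Ω₀ x ^ 2 - Ω₀ ^ 2 * ‖x‖ ^ 2 * rhoTF Ω₀ x / 4) B1 :=
    integrableOn_B1_of_continuous (by fun_prop)
  have hhole : IntegrableOn (fun x => max 0 ((1 - tfWidth Ω₀) - ‖x‖ ^ 2) * ρ x) B1 :=
    hint.continuousOn_mul_of_subset
      (by fun_prop : Continuous fun x : Pt => max 0 ((1 - tfWidth Ω₀) - ‖x‖ ^ 2)).continuousOn
      (isCompact_closedBall 0 1) measurableSet_B1 Metric.ball_subset_closedBall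
  have hmass_diff : ∫ x in B1, (ρ x - rhoTF Ω₀ x) = 0 := by
    rw [integral_sub hint (integrableOn_B1_of_continuous hcont), hmass, integral_rhoTF hΩ hδ,
      sub_self]
  simp only [tfEnergy, tfEnergy_integrand_eq hΩ hδ ρ]
  rw [integral_add ((hTF.fun_add hdiff_sq).fun_sub (hdiff.const_mul _)) (hhole.const_mul _),
    integral_sub (hTF.fun_add hdiff_sq) (hdiff.const_mul _), integral_add hTF hdiff_sq,
    integral_const_mul, integral_const_mul, hmass_diff, mul_zero, sub_zero]

theorem tfEnergy_rhoTF_le (hΩ : 0 < Ω₀) (hδ : tfWidth Ω₀ < 1) {ρ : Pt → ℝ} (hρ : tfAdm ρ) :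
    tfEnergy Ω₀ (rhoTF Ω₀) ≤ tfEnergy Ω₀ ρ := by
  have hhole : 0 ≤ ∫ x in B1, max 0 ((1 - tfWidth Ω₀) - ‖x‖ ^ 2) * ρ x :=
    integral_nonneg_of_ae <| hρ.2.2.1.mono fun x hx => mul_nonneg (le_max_left 0 _) hx
  have hdist : 0 ≤ ∫ x in B1, (ρ x - rhoTF Ω₀ x) ^ 2 := integral_nonneg fun x => sq_nonneg _
  rw [tfEnergy_eq_tfEnergy_rhoTF_add hΩ hδ hρ, add_assoc]
  exact le_add_of_nonneg_right (add_nonneg hdist (mul_nonneg (by positivity) hhole))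

end ThomasFermi

section GrossPitaevskii

/-- The density `|(∇ - iA)Ψ|²` of the kinetic energy in the rotating frame, with the vector
potential `A = (Ω / 2) (-x₂, x₁)`. -/
def covGradSq (Ω : ℝ) (Ψ : Pt → ℂ) (x : Pt) : ℝ :=
  ‖pd1 Ψ x + Complex.I * (Ω / 2 * x 1 : ℝ) * Ψ x‖ ^ 2 +
    ‖pd2 Ψ x - Complex.I * (Ω / 2 * x 0 : ℝ) * Ψ x‖ ^ 2

theorem covGradSq_nonneg (Ω : ℝ) (Ψ : Pt → ℂ) (x : Pt) : 0 ≤ covGradSq Ω Ψ x := by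
  unfold covGradSq
  positivity

theorem covGradSq_eq (Ω : ℝ) (Ψ : Pt → ℂ) (x : Pt) :
    covGradSq Ω Ψ x = ‖pd1 Ψ x‖ ^ 2 + ‖pd2 Ψ x‖ ^ 2 -
      Ω * (starRingEnd ℂ (Ψ x) * angMom Ψ x).re + Ω ^ 2 / 4 * (‖x‖ ^ 2 * ‖Ψ x‖ ^ 2) := by
  rw [covGradSq, angMom, norm_sq_eq_add_sq]
  simp only [Complex.sq_norm, Complex.normSq_apply, Complex.mul_re, Complex.mul_im,
    Complex.sub_re, Complex.sub_im, Complex.add_re, Complex.add_im, Complex.neg_re, Complex.neg_im,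
    Complex.I_re, Complex.I_im, Complex.conj_re, Complex.conj_im, Complex.ofReal_re,
    Complex.ofReal_im]
  ring

variable {Ψ : Pt → ℂ}

theorem gpAdm.tfAdm_norm_sq (h : gpAdm Ψ) : tfAdm fun x => ‖Ψ x‖ ^ 2 := by
  obtain ⟨-, hsq, -, hquart, -, hmass⟩ := h
  exact ⟨hsq, by simpa only [← pow_mul] using hquart, .of_forall fun x => sq_nonneg _, hmass⟩

theorem gpAdm.integrableOn_covGradSq (h : gpAdm Ψ) (Ω : ℝ) : IntegrableOn (covGradSq Ω Ψ) B1 := by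
  obtain ⟨-, hsq, hgrad, -, hang, -⟩ := h
  rw [funext (covGradSq_eq Ω Ψ)]
  exact (hgrad.sub (hang.const_mul Ω)).add
    ((hsq.continuousOn_mul_of_subset (continuous_norm.pow 2).continuousOn
      (isCompact_closedBall 0 1) measurableSet_B1 Metric.ball_subset_closedBall).const_mul _)

theorem gpAdm.sq_mul_gpEnergy_eq (h : gpAdm Ψ) {ε : ℝ} (hε : ε ≠ 0) (Ω : ℝ) :
    ε ^ 2 * gpEnergy ε Ω Ψ =
      ε ^ 2 * (∫ x in B1, covGradSq Ω Ψ x) + tfEnergy (ε * Ω) fun x => ‖Ψ x‖ ^ 2 := by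
  have hpt (x : Pt) : ε ^ 2 * gpDensity ε Ω Ψ x = ε ^ 2 * covGradSq Ω Ψ x +
      ((‖Ψ x‖ ^ 2) ^ 2 - (ε * Ω) ^ 2 * ‖x‖ ^ 2 * ‖Ψ x‖ ^ 2 / 4) := by
    rw [covGradSq_eq, gpDensity]
    field_simp
    ring
  have htf : IntegrableOn
      (fun x => (‖Ψ x‖ ^ 2) ^ 2 - (ε * Ω) ^ 2 * ‖x‖ ^ 2 * ‖Ψ x‖ ^ 2 / 4) B1 := by
    refine h.tfAdm_norm_sq.2.1.sub (Integrable.div_const ?_ 4)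
    exact h.tfAdm_norm_sq.1.continuousOn_mul_of_subset
      (by fun_prop : Continuous fun x : Pt => (ε * Ω) ^ 2 * ‖x‖ ^ 2).continuousOn
      (isCompact_closedBall 0 1) measurableSet_B1 Metric.ball_subset_closedBall
  rw [gpEnergy, tfEnergy, ← integral_const_mul, ← integral_const_mul,
    ← integral_add ((h.integrableOn_covGradSq Ω).const_mul _) htf]
  simp only [hpt]

theorem gpAdm.tfEnergy_rhoTF_le (h : gpAdm Ψ) {ε Ω : ℝ} (hε : 0 < ε) (hΩ : 0 < Ω)
    (hδ : tfWidth (ε * Ω) < 1) :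
    tfEnergy (ε * Ω) (rhoTF (ε * Ω)) ≤ ε ^ 2 * gpEnergy ε Ω Ψ := by
  have hkin : 0 ≤ ∫ x in B1, covGradSq Ω Ψ x := integral_nonneg (covGradSq_nonneg Ω Ψ)
  rw [h.sq_mul_gpEnergy_eq hε.ne' Ω]
  exact (_root_.tfEnergy_rhoTF_le (mul_pos hε hΩ) hδ h.tfAdm_norm_sq).trans
    (le_add_of_nonneg_left (mul_nonneg (sq_nonneg ε) hkin))

end GrossPitaevskii

section Vortex

/-- The identification `x ↦ x₁ + i x₂` of the plane with `ℂ`. -/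
def toComplex : Pt ≃ₗᵢ[ℝ] ℂ := Complex.orthonormalBasisOneI.repr.symm

/-- The phase factor `e^{iθ}` of a point of the plane in polar coordinates, with junk value `0` at
the origin. -/
def phase (x : Pt) : ℂ := ‖x‖⁻¹ • toComplex x

/-- The 1-form `v ↦ x ∧ v = x₁ v₂ - x₂ v₁`, which is `‖x‖² dθ`. -/
def angularForm (x : Pt) : Pt →L[ℝ] ℝ :=
  x 0 • EuclideanSpace.proj 1 - x 1 • EuclideanSpace.proj 0

/-- The vortex of degree `n` at the origin whose modulus is the function `f` of `‖x‖²`. -/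
def vortex (f : ℝ → ℝ) (n : ℕ) (x : Pt) : ℂ := f (‖x‖ ^ 2) * phase x ^ n

theorem norm_sq_smul_toComplex (x v : Pt) :
    ‖x‖ ^ 2 • toComplex v = (inner ℝ x v + angularForm x v * Complex.I) * toComplex x := by
  simp only [toComplex, Complex.orthonormalBasisOneI_repr_symm_apply, norm_sq_eq_add_sq,
    angularForm, PiLp.inner_apply, Fin.sum_univ_two, RCLike.inner_apply, ringHom_apply,
    sub_apply, smul_apply, PiLp.proj_apply, smul_eq_mul, Complex.real_smul, Complex.ofReal_add,
    Complex.ofReal_sub, Complex.ofReal_mul, Complex.ofReal_pow]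
  linear_combination (-(x 0 : ℂ) * v 1 * x 1 + x 1 ^ 2 * v 0) * Complex.I_sq

variable {x : Pt}

theorem norm_phase (hx : x ≠ 0) : ‖phase x‖ = 1 := by
  simp [phase, hx]

theorem hasFDerivAt_phase (hx : x ≠ 0) :
    HasFDerivAt phase (((‖x‖ ^ 2)⁻¹ • angularForm x).smulRight (Complex.I * phase x)) x := by
  have hx' : ‖x‖ ≠ 0 := norm_ne_zero_iff.2 hx
  have hnorm : HasFDerivAt (fun y : Pt => ‖y‖) ((1 / (2 * ‖x‖)) • 2 • innerSL ℝ x) x := by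
    simpa only [sqrt_sq (norm_nonneg _)] using
      (hasStrictFDerivAt_norm_sq x).hasFDerivAt.sqrt (pow_ne_zero 2 hx')
  refine (((hasDerivAt_inv hx').comp_hasFDerivAt x hnorm).smul
    toComplex.toContinuousLinearEquiv.hasFDerivAt).congr_fderiv ?_
  ext v
  have hz : (‖x‖ : ℂ) ≠ 0 := Complex.ofReal_ne_zero.2 hx'
  have hv := norm_sq_smul_toComplex x v
  simp only [phase, Complex.real_smul, Function.comp_apply, add_apply, smul_apply,
    LinearIsometryEquiv.coe_toContinuousLinearEquiv, ContinuousLinearEquiv.coe_coe,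
    ContinuousLinearMap.smulRight_apply, coe_innerSL_apply, nsmul_eq_mul, smul_eq_mul] at hv ⊢
  push_cast at hv ⊢
  field_simp
  linear_combination hv

theorem hasFDerivAt_vortex (hx : x ≠ 0) {f : ℝ → ℝ} {f' : ℝ} (hf : HasDerivAt f f' (‖x‖ ^ 2))
    (n : ℕ) :
    HasFDerivAt (vortex f n)
      ((2 * f') • (innerSL ℝ x).smulRight (phase x ^ n) +
        (n * f (‖x‖ ^ 2) / ‖x‖ ^ 2) • (angularForm x).smulRight (Complex.I * phase x ^ n)) x := by
  have hmod : HasFDerivAt (fun y : Pt => f (‖y‖ ^ 2)) (f' • 2 • innerSL ℝ x) x :=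
    hf.comp_hasFDerivAt x (hasStrictFDerivAt_norm_sq x).hasFDerivAt
  refine ((Complex.ofRealCLM.hasFDerivAt.comp x hmod).mul
    ((hasFDerivAt_phase hx).pow n)).congr_fderiv ?_
  ext v
  simp only [Function.comp_apply, Complex.ofRealCLM_apply, nsmul_eq_mul, smul_eq_mul, add_apply,
    smul_apply, ContinuousLinearMap.comp_apply, ContinuousLinearMap.smulRight_apply,
    coe_innerSL_apply, Complex.real_smul]
  rcases n with _ | n <;> push_cast <;> ring

theorem norm_vortex_sq (hx : x ≠ 0) (f : ℝ → ℝ) (n : ℕ) :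
    ‖vortex f n x‖ ^ 2 = f (‖x‖ ^ 2) ^ 2 := by
  simp [vortex, norm_phase hx]

theorem angularForm_single_zero (x : Pt) : angularForm x (EuclideanSpace.single 0 1) = -x 1 := by
  simp [angularForm]

theorem angularForm_single_one (x : Pt) : angularForm x (EuclideanSpace.single 1 1) = x 0 := by
  simp [angularForm]

theorem pd1_vortex (hx : x ≠ 0) {f : ℝ → ℝ} {f' : ℝ} (hf : HasDerivAt f f' (‖x‖ ^ 2)) (n : ℕ) :
    pd1 (vortex f n) x =
      (2 * f' * x 0 - n * f (‖x‖ ^ 2) / ‖x‖ ^ 2 * x 1 * Complex.I) * phase x ^ n := by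
  simp only [pd1, (hasFDerivAt_vortex hx hf n).fderiv, add_apply, smul_apply,
    ContinuousLinearMap.smulRight_apply, coe_innerSL_apply, EuclideanSpace.inner_single_right,
    angularForm_single_zero, ringHom_apply, one_mul, Complex.real_smul]
  push_cast
  ring

theorem pd2_vortex (hx : x ≠ 0) {f : ℝ → ℝ} {f' : ℝ} (hf : HasDerivAt f f' (‖x‖ ^ 2)) (n : ℕ) :
    pd2 (vortex f n) x =
      (2 * f' * x 1 + n * f (‖x‖ ^ 2) / ‖x‖ ^ 2 * x 0 * Complex.I) * phase x ^ n := by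
  simp only [pd2, (hasFDerivAt_vortex hx hf n).fderiv, add_apply, smul_apply,
    ContinuousLinearMap.smulRight_apply, coe_innerSL_apply, EuclideanSpace.inner_single_right,
    angularForm_single_one, ringHom_apply, one_mul, Complex.real_smul]
  push_cast
  ring

theorem angMom_vortex (hx : x ≠ 0) {f : ℝ → ℝ} (hf : DifferentiableAt ℝ f (‖x‖ ^ 2)) (n : ℕ) :
    angMom (vortex f n) x = n * vortex f n x := by
  have hz : (‖x‖ : ℂ) ≠ 0 := by simpa using hx
  have hsq : (‖x‖ : ℂ) ^ 2 = (x 0 : ℂ) ^ 2 + (x 1 : ℂ) ^ 2 := by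
    exact_mod_cast norm_sq_eq_add_sq x
  rw [angMom, pd1_vortex hx hf.hasDerivAt, pd2_vortex hx hf.hasDerivAt, vortex]
  field_simp
  linear_combination
    (-n * f (‖x‖ ^ 2) * phase x ^ n * ((x 0 : ℂ) ^ 2 + (x 1 : ℂ) ^ 2)) * Complex.I_sq -
      n * f (‖x‖ ^ 2) * phase x ^ n * hsq

theorem covGradSq_vortex (hx : x ≠ 0) {f : ℝ → ℝ} {f' : ℝ} (hf : HasDerivAt f f' (‖x‖ ^ 2))
    (Ω : ℝ) (n : ℕ) :
    covGradSq Ω (vortex f n) x =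
      4 * ‖x‖ ^ 2 * f' ^ 2 + (n - Ω / 2 * ‖x‖ ^ 2) ^ 2 / ‖x‖ ^ 2 * f (‖x‖ ^ 2) ^ 2 := by
  have hx' : ‖x‖ ≠ 0 := norm_ne_zero_iff.2 hx
  set q : ℝ := (n / ‖x‖ ^ 2 - Ω / 2) * f (‖x‖ ^ 2) with hq
  have hcov₁ : pd1 (vortex f n) x + Complex.I * (Ω / 2 * x 1 : ℝ) * vortex f n x =
      ((2 * f' * x 0 : ℝ) + (-(q * x 1) : ℝ) * Complex.I) * phase x ^ n := by
    rw [pd1_vortex hx hf, vortex, hq]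
    push_cast
    ring
  have hcov₂ : pd2 (vortex f n) x - Complex.I * (Ω / 2 * x 0 : ℝ) * vortex f n x =
      ((2 * f' * x 1 : ℝ) + (q * x 0 : ℝ) * Complex.I) * phase x ^ n := by
    rw [pd2_vortex hx hf, vortex, hq]
    push_cast
    ring
  calc covGradSq Ω (vortex f n) x
      = (4 * f' ^ 2 + q ^ 2) * (x 0 ^ 2 + x 1 ^ 2) := by
        rw [covGradSq, hcov₁, hcov₂]
        simp only [norm_mul, norm_pow, norm_phase hx, one_pow, mul_one, Complex.sq_norm,
          Complex.normSq_add_mul_I]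
        ring
    _ = 4 * ‖x‖ ^ 2 * f' ^ 2 + (n - Ω / 2 * ‖x‖ ^ 2) ^ 2 / ‖x‖ ^ 2 * f (‖x‖ ^ 2) ^ 2 := by
        rw [← norm_sq_eq_add_sq, hq]
        field_simp

theorem differentiableAt_vortex {f : ℝ → ℝ} (hf : Differentiable ℝ f) (hf₀ : f =ᶠ[𝓝 0] 0) (n : ℕ)
    (x : Pt) : DifferentiableAt ℝ (vortex f n) x := by
  rcases eq_or_ne x 0 with rfl | hx
  · have hzero : vortex f n =ᶠ[𝓝 0] fun _ => 0 := by
      have hnorm : Tendsto (fun y : Pt => ‖y‖ ^ 2) (𝓝 0) (𝓝 0) := by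
        simpa [Pi.pow_def] using (continuous_norm.pow 2).tendsto (0 : Pt)
      filter_upwards [hnorm.eventually hf₀] with y hy
      simp [vortex, hy]
    exact (differentiableAt_const 0).congr_of_eventuallyEq hzero
  · exact (hasFDerivAt_vortex hx hf.differentiableAt.hasDerivAt n).differentiableAt

end Vortex

section GiantVortex

/-- The squared `L²` norm on the disc of the unnormalised modulus of `giantVortex δ n`. -/
def giantVortexMass (δ : ℝ) : ℝ := π * ∫ u in (0 : ℝ)..δ, edgeProfile (δ ^ 2) u ^ 2

/-- The trial state: a normalised vortex of degree `n` supported in the annulus of width `δ` in the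
variable `‖x‖²`. The regularisation scale `δ²` of its inner edge balances the distance to the
Thomas–Fermi density against a kinetic energy that diverges logarithmically in the scale. -/
def giantVortex (δ : ℝ) (n : ℕ) : Pt → ℂ :=
  vortex (fun s => edgeProfile (δ ^ 2) (s - (1 - δ)) / √(giantVortexMass δ)) n

variable {δ : ℝ}

theorem giantVortexMass_le (hδ : 0 < δ) : giantVortexMass δ ≤ π * (δ ^ 2 / 2) :=
  mul_le_mul_of_nonneg_left (intervalIntegral_edgeProfile_sq_le (by positivity) hδ.le) pi_nonneg

theorem le_giantVortexMass (hδ : 0 < δ) : π * (δ ^ 2 / 2 * (1 - 6 * δ)) ≤ giantVortexMass δ := by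
  refine mul_le_mul_of_nonneg_left (le_trans (le_of_eq ?_)
    (le_intervalIntegral_edgeProfile_sq (by positivity) hδ.le)) pi_nonneg
  ring

theorem giantVortexMass_pos (hδ₀ : 0 < δ) (hδ₁ : δ < 1 / 6) : 0 < giantVortexMass δ :=
  lt_of_lt_of_le (mul_pos pi_pos (mul_pos (by positivity) (by linarith))) (le_giantVortexMass hδ₀)

theorem setIntegral_edgeProfile_sq (hδ₀ : 0 < δ) (hδ₁ : δ ≤ 1) :
    ∫ x in B1, edgeProfile (δ ^ 2) (‖x‖ ^ 2 - (1 - δ)) ^ 2 = giantVortexMass δ :=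
  setIntegral_B1_comp_norm_sq_sub (F := fun u => edgeProfile (δ ^ 2) u ^ 2) hδ₀.le hδ₁
    fun u hu => by simp [edgeProfile_of_nonpos _ hu]

theorem hasDerivAt_giantVortex_modulus (hδ : 0 < δ) (s : ℝ) :
    HasDerivAt (fun s => edgeProfile (δ ^ 2) (s - (1 - δ)) / √(giantVortexMass δ))
      (edgeSlope (δ ^ 2) (s - (1 - δ)) / √(giantVortexMass δ)) s :=
  ((hasDerivAt_edgeProfile (by positivity) _).comp_sub_const s (1 - δ)).div_const _

theorem differentiable_giantVortex (hδ₀ : 0 < δ) (hδ₁ : δ < 1) (n : ℕ) :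
    Differentiable ℝ (giantVortex δ n) := by
  refine fun x => differentiableAt_vortex
    (fun s => (hasDerivAt_giantVortex_modulus hδ₀ s).differentiableAt) ?_ n x
  filter_upwards [gt_mem_nhds (sub_pos.2 hδ₁)] with s hs
  simp [edgeProfile_of_nonpos _ (sub_nonpos.2 hs.le)]

theorem norm_giantVortex_sq (hδ₀ : 0 < δ) (hδ₁ : δ < 1 / 6) (n : ℕ) (x : Pt) :
    ‖giantVortex δ n x‖ ^ 2 =
      edgeProfile (δ ^ 2) (‖x‖ ^ 2 - (1 - δ)) ^ 2 / giantVortexMass δ := by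
  rcases eq_or_ne x 0 with rfl | hx
  · have hcentre : ‖(0 : Pt)‖ ^ 2 - (1 - δ) ≤ 0 := by
      rw [norm_zero]
      linarith
    rw [giantVortex, vortex, edgeProfile_of_nonpos _ hcentre]
    simp
  · rw [giantVortex, norm_vortex_sq hx, div_pow, sq_sqrt (giantVortexMass_pos hδ₀ hδ₁).le]

theorem covGradSq_giantVortex_le (hδ₀ : 0 < δ) (hδ₁ : δ < 1 / 6) {x : Pt} (hx : x ∈ B1)
    (hx₀ : x ≠ 0) {Ω K : ℝ} {n : ℕ} (hK : ∀ s ∈ Set.Icc (1 - δ) 1, |n - Ω / 2 * s| ≤ K) :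
    covGradSq Ω (giantVortex δ n) x ≤
      4 / giantVortexMass δ * edgeSlope (δ ^ 2) (‖x‖ ^ 2 - (1 - δ)) ^ 2 +
        2 * K ^ 2 * ‖giantVortex δ n x‖ ^ 2 := by
  have hM := giantVortexMass_pos hδ₀ hδ₁
  have hx₁ := (norm_sq_lt_one_of_mem_B1 hx).le
  rw [norm_giantVortex_sq hδ₀ hδ₁, giantVortex,
    covGradSq_vortex hx₀ (hasDerivAt_giantVortex_modulus hδ₀ _), div_pow, div_pow, sq_sqrt hM.le,
    div_mul_eq_mul_div 4, ← mul_div_assoc (4 * ‖x‖ ^ 2)]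
  refine add_le_add ?_ ?_
  · gcongr
    linarith
  rcases le_total (‖x‖ ^ 2) (1 - δ) with h | h
  · simp [edgeProfile_of_nonpos _ (sub_nonpos.2 h)]
  · refine mul_le_mul_of_nonneg_right ?_ (by positivity)
    have hsq : (n - Ω / 2 * ‖x‖ ^ 2) ^ 2 ≤ K ^ 2 :=
      sq_le_sq.2 ((hK _ ⟨h, hx₁⟩).trans (le_abs_self K))
    rw [div_le_iff₀ (by linarith)]
    calc (n - Ω / 2 * ‖x‖ ^ 2) ^ 2 ≤ 2 * K ^ 2 * (1 / 2) := by linarith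
      _ ≤ 2 * K ^ 2 * ‖x‖ ^ 2 := by gcongr; linarith

theorem ae_mem_B1_and_ne_zero : ∀ᵐ x ∂volume.restrict B1, x ∈ B1 ∧ x ≠ 0 :=
  (ae_restrict_mem measurableSet_B1).and (ae_restrict_of_ae (Measure.ae_ne volume 0))

theorem gpAdm_giantVortex (hδ₀ : 0 < δ) (hδ₁ : δ < 1 / 6) (n : ℕ) : gpAdm (giantVortex δ n) := by
  have hM := giantVortexMass_pos hδ₀ hδ₁
  have hdiff := differentiable_giantVortex hδ₀ (by linarith) n
  have hcont := hdiff.continuous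
  have hslope := continuous_edgeSlope (pow_pos hδ₀ 2)
  refine ⟨hdiff.differentiableOn, integrableOn_B1_of_continuous (by fun_prop), ?_,
    integrableOn_B1_of_continuous (by fun_prop), ?_, ?_⟩
  · have hgrad : ∀ x, ‖pd1 (giantVortex δ n) x‖ ^ 2 + ‖pd2 (giantVortex δ n) x‖ ^ 2 =
        covGradSq 0 (giantVortex δ n) x := fun x => by simp [covGradSq_eq]
    refine (integrableOn_B1_of_continuous
      (f := fun x => 4 / giantVortexMass δ * edgeSlope (δ ^ 2) (‖x‖ ^ 2 - (1 - δ)) ^ 2 +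
        2 * (n : ℝ) ^ 2 * ‖giantVortex δ n x‖ ^ 2)
      (by fun_prop)).mono' ?_ ?_
    · exact (((measurable_fderiv_apply_const ℝ _ _).norm.pow_const 2).add
        ((measurable_fderiv_apply_const ℝ _ _).norm.pow_const 2)).aestronglyMeasurable
    · filter_upwards [ae_mem_B1_and_ne_zero] with x ⟨hx, hx₀⟩
      rw [hgrad, norm_of_nonneg (covGradSq_nonneg 0 _ x)]
      exact covGradSq_giantVortex_le hδ₀ hδ₁ hx hx₀ fun s _ => by simp
  · have hang : IntegrableOn (fun x => n * ‖giantVortex δ n x‖ ^ 2) B1 :=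
      integrableOn_B1_of_continuous (by fun_prop)
    refine hang.congr ?_
    filter_upwards [ae_mem_B1_and_ne_zero] with x ⟨_, hx₀⟩
    rw [giantVortex, angMom_vortex hx₀ (hasDerivAt_giantVortex_modulus hδ₀ _).differentiableAt,
      mul_left_comm, Complex.conj_mul']
    norm_cast
  · simp only [norm_giantVortex_sq hδ₀ hδ₁]
    rw [integral_div, setIntegral_edgeProfile_sq hδ₀ (by linarith), div_self hM.ne']

theorem setIntegral_covGradSq_giantVortex_le (hδ₀ : 0 < δ) (hδ₁ : δ < 1 / 6) {Ω K : ℝ} {n : ℕ}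
    (hK : ∀ s ∈ Set.Icc (1 - δ) 1, |n - Ω / 2 * s| ≤ K) :
    ∫ x in B1, covGradSq Ω (giantVortex δ n) x ≤
      4 / giantVortexMass δ * (π * log ((1 + δ) / δ)) + 2 * K ^ 2 := by
  have hM := giantVortexMass_pos hδ₀ hδ₁
  have hk : 0 < δ ^ 2 := pow_pos hδ₀ 2
  have hcont := (differentiable_giantVortex hδ₀ (by linarith) n).continuous
  have hslope := continuous_edgeSlope hk
  have hslope_sq : ∫ x in B1, edgeSlope (δ ^ 2) (‖x‖ ^ 2 - (1 - δ)) ^ 2 ≤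
      π * log ((1 + δ) / δ) := by
    rw [setIntegral_B1_comp_norm_sq_sub (F := fun u => edgeSlope (δ ^ 2) u ^ 2) hδ₀.le (by linarith)
      fun u hu => by simp [edgeSlope_of_nonpos _ hu], smul_eq_mul,
      show (1 + δ) / δ = (δ + δ ^ 2) / δ ^ 2 by field_simp]
    exact mul_le_mul_of_nonneg_left (intervalIntegral_edgeSlope_sq_le hk hδ₀.le) pi_nonneg
  have hmass := (gpAdm_giantVortex hδ₀ hδ₁ n).2.2.2.2.2
  calc ∫ x in B1, covGradSq Ω (giantVortex δ n) x
      ≤ ∫ x in B1, (4 / giantVortexMass δ * edgeSlope (δ ^ 2) (‖x‖ ^ 2 - (1 - δ)) ^ 2 +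
        2 * K ^ 2 * ‖giantVortex δ n x‖ ^ 2) := by
        refine integral_mono_ae ((gpAdm_giantVortex hδ₀ hδ₁ n).integrableOn_covGradSq Ω)
          (integrableOn_B1_of_continuous (by fun_prop)) ?_
        filter_upwards [ae_mem_B1_and_ne_zero] with x ⟨hx, hx₀⟩
        exact covGradSq_giantVortex_le hδ₀ hδ₁ hx hx₀ hK
    _ = 4 / giantVortexMass δ * (∫ x in B1, edgeSlope (δ ^ 2) (‖x‖ ^ 2 - (1 - δ)) ^ 2) +
        2 * K ^ 2 := by
        rw [integral_add (integrableOn_B1_of_continuous (by fun_prop))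
          (integrableOn_B1_of_continuous (by fun_prop)), integral_const_mul, integral_const_mul,
          hmass, mul_one]
    _ ≤ 4 / giantVortexMass δ * (π * log ((1 + δ) / δ)) + 2 * K ^ 2 := by gcongr

end GiantVortex

section TrialEnergy

variable {ω : ℝ}

theorem abs_norm_giantVortex_sq_sub_rhoTF_le (hω : 0 < ω) (hδ : tfWidth ω ≤ 1 / 12) (n : ℕ)
    {x : Pt} (hx : x ∈ B1) : |‖giantVortex (tfWidth ω) n x‖ ^ 2 - rhoTF ω x| ≤ 8 := by
  have hδ₀ := tfWidth_pos hω
  have hpi := pi_mul_sq_mul_tfWidth_sq hω.ne'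
  rw [norm_giantVortex_sq hδ₀ (by linarith), rhoTF_eq_of_tfWidth_lt_one hω (by linarith)]
  set δ := tfWidth ω
  set M := giantVortexMass δ
  set u := ‖x‖ ^ 2 - (1 - δ)
  have hM : 0 < M := giantVortexMass_pos hδ₀ (by linarith)
  have hmass_le : ω ^ 2 / 8 * M ≤ 1 := by
    linarith [mul_le_mul_of_nonneg_left (giantVortexMass_le hδ₀) (by positivity : 0 ≤ ω ^ 2 / 8)]
  have hle_mass : 1 - 6 * δ ≤ ω ^ 2 / 8 * M := by
    linarith [mul_le_mul_of_nonneg_left (le_giantVortexMass hδ₀) (by positivity : 0 ≤ ω ^ 2 / 8),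
      congrArg (· * δ) hpi]
  have hle_M : 6 * δ ^ 2 ≤ 8 * M := by
    calc 6 * δ ^ 2 = 8 * (3 * (δ ^ 2 / 2 * (1 / 2))) := by ring
      _ ≤ 8 * (π * (δ ^ 2 / 2 * (1 - 6 * δ))) := by
        gcongr
        · exact pi_gt_three.le
        · linarith
      _ ≤ 8 * M := by gcongr; exact le_giantVortexMass hδ₀
  have hv₀ : 0 ≤ max 0 u := le_max_left 0 u
  have hv : max 0 u ≤ δ := max_le hδ₀.le (by linarith [norm_sq_lt_one_of_mem_B1 hx])
  have hnum : |edgeProfile (δ ^ 2) u ^ 2 - ω ^ 2 / 8 * M * max 0 u| ≤ 6 * δ ^ 2 := by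
    rw [abs_le]
    constructor
    · linarith [sub_le_edgeProfile_sq (pow_pos hδ₀ 2) u, mul_le_mul_of_nonneg_right hmass_le hv₀,
        sq_nonneg δ]
    · linarith [edgeProfile_sq_le (pow_pos hδ₀ 2) u, mul_le_mul_of_nonneg_right hle_mass hv₀,
        mul_le_mul_of_nonneg_left hv hδ₀.le]
  calc |edgeProfile (δ ^ 2) u ^ 2 / M - ω ^ 2 / 8 * max 0 u|
      = |edgeProfile (δ ^ 2) u ^ 2 - ω ^ 2 / 8 * M * max 0 u| / M := by
        rw [← abs_of_pos hM, ← abs_div, abs_of_pos hM]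
        field_simp
    _ ≤ 8 := (div_le_iff₀ hM).2 (hnum.trans hle_M)

theorem tfEnergy_norm_giantVortex_sq_le (hω : 0 < ω) (hδ : tfWidth ω ≤ 1 / 12) (n : ℕ) :
    (tfEnergy ω fun x => ‖giantVortex (tfWidth ω) n x‖ ^ 2) ≤
      tfEnergy ω (rhoTF ω) + 64 * π := by
  have hδ₀ := tfWidth_pos hω
  have hcont := (differentiable_giantVortex hδ₀ (by linarith) n).continuous
  have hcont_rho := continuous_rhoTF hω (by linarith)
  have hhole (x : Pt) :
      max 0 ((1 - tfWidth ω) - ‖x‖ ^ 2) * ‖giantVortex (tfWidth ω) n x‖ ^ 2 = 0 := by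
    rw [norm_giantVortex_sq hδ₀ (by linarith)]
    rcases le_total (‖x‖ ^ 2) (1 - tfWidth ω) with h | h
    · simp [edgeProfile_of_nonpos _ (sub_nonpos.2 h)]
    · simp [max_eq_left (sub_nonpos.2 h)]
  have hdist : ∫ x in B1, (‖giantVortex (tfWidth ω) n x‖ ^ 2 - rhoTF ω x) ^ 2 ≤ 64 * π := by
    calc ∫ x in B1, (‖giantVortex (tfWidth ω) n x‖ ^ 2 - rhoTF ω x) ^ 2
        ≤ ∫ _ in B1, (64 : ℝ) := by
          refine setIntegral_mono_on (integrableOn_B1_of_continuous (by fun_prop))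
            (integrableOn_B1_of_continuous continuous_const) measurableSet_B1 fun x hx => ?_
          calc (‖giantVortex (tfWidth ω) n x‖ ^ 2 - rhoTF ω x) ^ 2
              ≤ 8 ^ 2 := sq_le_sq' (abs_le.1 (abs_norm_giantVortex_sq_sub_rhoTF_le hω hδ n hx)).1
                (abs_le.1 (abs_norm_giantVortex_sq_sub_rhoTF_le hω hδ n hx)).2
            _ = 64 := by norm_num
      _ = 64 * π := by rw [setIntegral_const, volume_real_B1, smul_eq_mul, mul_comm]
  rw [tfEnergy_eq_tfEnergy_rhoTF_add hω (by linarith)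
    (gpAdm_giantVortex hδ₀ (by linarith) n).tfAdm_norm_sq]
  simpa [hhole] using hdist

variable {ε Ω : ℝ}

-- The degree `⌊Ω / 2⌋` makes the phase gradient compensate the vector potential at `‖x‖ = 1`.
theorem sq_mul_setIntegral_covGradSq_giantVortex_le (hε₀ : 0 < ε) (hε₁ : ε ≤ 1) (hΩ : 0 < Ω)
    (hδ : tfWidth (ε * Ω) ≤ 1 / 12) :
    ε ^ 2 * ∫ x in B1, covGradSq Ω (giantVortex (tfWidth (ε * Ω)) ⌊Ω / 2⌋₊) x ≤
      π * ((ε * Ω) ^ 2 * ε ^ 2 * log ((1 + tfWidth (ε * Ω)) / tfWidth (ε * Ω))) + 10 := by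
  have hω := mul_pos hε₀ hΩ
  have hδ₀ := tfWidth_pos hω
  have hpi := pi_mul_sq_mul_tfWidth_sq hω.ne'
  set δ := tfWidth (ε * Ω)
  have hM := giantVortexMass_pos hδ₀ (by linarith)
  have hK : ∀ s ∈ Set.Icc (1 - δ) 1, |⌊Ω / 2⌋₊ - Ω / 2 * s| ≤ 1 + Ω / 2 * δ := by
    rintro s ⟨hs₀, hs₁⟩
    have hfloor := Nat.floor_le (by positivity : 0 ≤ Ω / 2)
    have hlt := Nat.lt_floor_add_one (Ω / 2)
    have hs : 0 ≤ Ω / 2 * (1 - s) := mul_nonneg (by positivity) (by linarith)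
    have hsδ : Ω / 2 * (1 - s) ≤ Ω / 2 * δ := by gcongr; linarith
    rw [abs_le]
    constructor <;> linarith
  have hmass : 4 / giantVortexMass δ ≤ (ε * Ω) ^ 2 := by
    rw [div_le_iff₀ hM]
    linarith [mul_le_mul_of_nonneg_left (le_giantVortexMass hδ₀) (sq_nonneg (ε * Ω)),
      congrArg (· * δ) hpi]
  have hlog : 0 ≤ log ((1 + δ) / δ) := log_nonneg ((one_le_div hδ₀).2 (by linarith))
  have hphase : ε ^ 2 * (2 * (1 + Ω / 2 * δ) ^ 2) ≤ 10 := by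
    have hcross : (ε * Ω) ^ 2 * δ ^ 2 ≤ 16 / 3 := by
      nlinarith [pi_gt_three, sq_nonneg (ε * Ω * δ)]
    nlinarith [sq_nonneg (ε * (1 - Ω / 2 * δ)), pow_le_one₀ (n := 2) hε₀.le hε₁]
  calc ε ^ 2 * ∫ x in B1, covGradSq Ω (giantVortex δ ⌊Ω / 2⌋₊) x
      ≤ ε ^ 2 * (4 / giantVortexMass δ * (π * log ((1 + δ) / δ)) + 2 * (1 + Ω / 2 * δ) ^ 2) := by
        gcongr
        exact setIntegral_covGradSq_giantVortex_le hδ₀ (by linarith) hK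
    _ ≤ ε ^ 2 * ((ε * Ω) ^ 2 * (π * log ((1 + δ) / δ))) + 10 := by
        rw [mul_add]
        gcongr
    _ = π * ((ε * Ω) ^ 2 * ε ^ 2 * log ((1 + δ) / δ)) + 10 := by ring

theorem gpAdm.gpGround_le {Ψ : Pt → ℂ} (h : gpAdm Ψ) (hε : 0 < ε) (hΩ : 0 < Ω)
    (hδ : tfWidth (ε * Ω) < 1) : gpGround ε Ω ≤ gpEnergy ε Ω Ψ := by
  refine csInf_le ⟨tfEnergy (ε * Ω) (rhoTF (ε * Ω)) / ε ^ 2, ?_⟩ ⟨Ψ, h, rfl⟩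
  rintro _ ⟨Φ, hΦ, rfl⟩
  exact (div_le_iff₀' (by positivity)).2 (hΦ.tfEnergy_rhoTF_le hε hΩ hδ)

theorem tfEnergy_rhoTF_le_sq_mul_gpGround (hε : 0 < ε) (hΩ : 0 < Ω)
    (hδ : tfWidth (ε * Ω) < 1) :
    tfEnergy (ε * Ω) (rhoTF (ε * Ω)) ≤ ε ^ 2 * gpGround ε Ω := by
  refine (div_le_iff₀' (by positivity)).1 (le_csInf ?_ ?_)
  · exact ⟨_, _, gpAdm_giantVortex (δ := 1 / 12) (by norm_num) (by norm_num) 0, rfl⟩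
  · rintro _ ⟨Φ, hΦ, rfl⟩
    exact (div_le_iff₀' (by positivity)).2 (hΦ.tfEnergy_rhoTF_le hε hΩ hδ)

theorem sq_mul_gpGround_le (hε₀ : 0 < ε) (hε₁ : ε ≤ 1) (hΩ : 0 < Ω)
    (hδ : tfWidth (ε * Ω) ≤ 1 / 12) :
    ε ^ 2 * gpGround ε Ω ≤ tfEnergy (ε * Ω) (rhoTF (ε * Ω)) + (64 * π + 10) +
      π * ((ε * Ω) ^ 2 * ε ^ 2 * log ((1 + tfWidth (ε * Ω)) / tfWidth (ε * Ω))) := by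
  have hω := mul_pos hε₀ hΩ
  have hadm := gpAdm_giantVortex (tfWidth_pos hω) (by linarith) ⌊Ω / 2⌋₊
  have hle := mul_le_mul_of_nonneg_left (hadm.gpGround_le hε₀ hΩ (by linarith)) (sq_nonneg ε)
  rw [hadm.sq_mul_gpEnergy_eq hε₀.ne'] at hle
  linarith [sq_mul_setIntegral_covGradSq_giantVortex_le hε₀ hε₁ hΩ hδ,
    tfEnergy_norm_giantVortex_sq_le hω hδ ⌊Ω / 2⌋₊]

end TrialEnergy

section RapidRotation

variable {Ω₁ α ε : ℝ}

theorem mul_div_rpow_one_add (hε : 0 < ε) (Ω₁ α : ℝ) : ε * (Ω₁ / ε ^ (1 + α)) = Ω₁ / ε ^ α := by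
  rw [rpow_add hε, rpow_one]
  field_simp

theorem tfWidth_div_rpow (Ω₁ α ε : ℝ) :
    tfWidth (Ω₁ / ε ^ α) = 4 * ε ^ α / (√π * Ω₁) := by
  rw [tfWidth, ← mul_div_assoc, div_div_eq_mul_div]

theorem rpow_two_mul (hε : 0 < ε) (α : ℝ) : ε ^ (2 * α) = (ε ^ α) ^ 2 := by
  rw [mul_comm, rpow_mul hε.le, rpow_two]

theorem rpow_two_mul_mul_tfEnergy_rhoTF (hΩ : 0 < Ω₁) (hε : 0 < ε)
    (hδ : tfWidth (Ω₁ / ε ^ α) < 1) :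
    ε ^ (2 * α) * tfEnergy (Ω₁ / ε ^ α) (rhoTF (Ω₁ / ε ^ α)) =
      -(Ω₁ ^ 2 / 4) * (1 - 8 * ε ^ α / (3 * √π * Ω₁)) := by
  rw [tfEnergy_rhoTF (by positivity) hδ, tfWidth_div_rpow, rpow_two_mul hε]
  field_simp
  ring

theorem log_one_add_tfWidth_div_tfWidth_le (hΩ : 0 < Ω₁) (hα : 0 ≤ α) (hε : 0 < ε)
    (hlog : 1 ≤ |log ε|) (hδ : tfWidth (Ω₁ / ε ^ α) ≤ 1) :
    log ((1 + tfWidth (Ω₁ / ε ^ α)) / tfWidth (Ω₁ / ε ^ α)) ≤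
      (|log (√π * Ω₁ / 2)| + α) * |log ε| := by
  have hεα := rpow_pos_of_pos hε α
  have hδ₀ : 0 < tfWidth (Ω₁ / ε ^ α) := tfWidth_pos (by positivity)
  calc log ((1 + tfWidth (Ω₁ / ε ^ α)) / tfWidth (Ω₁ / ε ^ α))
      ≤ log (2 / tfWidth (Ω₁ / ε ^ α)) := by gcongr; linarith
    _ = log (√π * Ω₁ / 2 / ε ^ α) := by
        rw [tfWidth_div_rpow]
        congr 1
        field_simp
        norm_num
    _ = log (√π * Ω₁ / 2) - α * log ε := by
        rw [log_div (by positivity) hεα.ne', log_rpow hε]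
    _ ≤ |log (√π * Ω₁ / 2)| * |log ε| + α * |log ε| := by
        have hconst := mul_le_mul_of_nonneg_left hlog (abs_nonneg (log (√π * Ω₁ / 2)))
        have hslope := mul_le_mul_of_nonneg_left (neg_le_abs (log ε)) hα
        linarith [le_abs_self (log (√π * Ω₁ / 2))]
    _ = (|log (√π * Ω₁ / 2)| + α) * |log ε| := by ring

theorem le_rpow_mul_gpGround (hΩ : 0 < Ω₁) (hε : 0 < ε) (hδ : tfWidth (Ω₁ / ε ^ α) < 1) :
    -(Ω₁ ^ 2 / 4) * (1 - 8 * ε ^ α / (3 * √π * Ω₁)) ≤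
      ε ^ (2 + 2 * α) * gpGround ε (Ω₁ / ε ^ (1 + α)) := by
  have hω := mul_div_rpow_one_add hε Ω₁ α
  have hle := tfEnergy_rhoTF_le_sq_mul_gpGround hε (div_pos hΩ (rpow_pos_of_pos hε (1 + α)))
    (hω ▸ hδ)
  rw [hω] at hle
  rw [← rpow_two_mul_mul_tfEnergy_rhoTF hΩ hε hδ, add_comm, rpow_add hε, rpow_two, mul_assoc]
  gcongr

theorem rpow_mul_gpGround_le (hΩ : 0 < Ω₁) (hα : 0 ≤ α) (hε₀ : 0 < ε) (hε₁ : ε ≤ 1)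
    (hlog : 1 ≤ |log ε|) (hδ : tfWidth (Ω₁ / ε ^ α) ≤ 1 / 12) :
    ε ^ (2 + 2 * α) * gpGround ε (Ω₁ / ε ^ (1 + α)) ≤
      -(Ω₁ ^ 2 / 4) * (1 - 8 * ε ^ α / (3 * √π * Ω₁)) + (64 * π + 10) * ε ^ (2 * α) +
        π * Ω₁ ^ 2 * (|log (√π * Ω₁ / 2)| + α) * ε ^ 2 * |log ε| := by
  have hω := mul_div_rpow_one_add hε₀ Ω₁ α
  have hle := sq_mul_gpGround_le hε₀ hε₁ (div_pos hΩ (rpow_pos_of_pos hε₀ (1 + α))) (hω ▸ hδ)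
  rw [hω] at hle
  set ω := Ω₁ / ε ^ α with hω_def
  have hscale : ε ^ (2 * α) * ω ^ 2 = Ω₁ ^ 2 := by
    rw [rpow_two_mul hε₀, hω_def]
    field_simp
  calc ε ^ (2 + 2 * α) * gpGround ε (Ω₁ / ε ^ (1 + α))
      = ε ^ (2 * α) * (ε ^ 2 * gpGround ε (Ω₁ / ε ^ (1 + α))) := by
        rw [add_comm, rpow_add hε₀, rpow_two, mul_assoc]
    _ ≤ ε ^ (2 * α) * (tfEnergy ω (rhoTF ω) + (64 * π + 10) +
          π * (ω ^ 2 * ε ^ 2 * log ((1 + tfWidth ω) / tfWidth ω))) := by gcongr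
    _ = ε ^ (2 * α) * tfEnergy ω (rhoTF ω) + (64 * π + 10) * ε ^ (2 * α) +
          π * Ω₁ ^ 2 * ε ^ 2 * log ((1 + tfWidth ω) / tfWidth ω) := by
        rw [← hscale]
        ring
    _ ≤ ε ^ (2 * α) * tfEnergy ω (rhoTF ω) + (64 * π + 10) * ε ^ (2 * α) +
          π * Ω₁ ^ 2 * ε ^ 2 * ((|log (√π * Ω₁ / 2)| + α) * |log ε|) := by
        gcongr
        exact log_one_add_tfWidth_div_tfWidth_le hΩ hα hε₀ hlog (by linarith)
    _ = _ := by
        rw [rpow_two_mul_mul_tfEnergy_rhoTF hΩ hε₀ (by linarith)]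
        ring

theorem tendsto_rpow_nhdsGT_zero (hα : 0 < α) :
    Tendsto (fun ε : ℝ => ε ^ α) (𝓝[>] 0) (𝓝 0) := by
  have h := (continuousAt_rpow_const 0 α (Or.inr hα.le)).tendsto
  rw [zero_rpow hα.ne'] at h
  exact h.mono_left nhdsWithin_le_nhds

theorem tendsto_sq_mul_abs_log_nhdsGT_zero :
    Tendsto (fun ε : ℝ => ε ^ 2 * |log ε|) (𝓝[>] 0) (𝓝 0) := by
  have h := (continuous_abs.mul continuous_mul_log.abs).tendsto' 0 0 (by simp)
  refine (h.mono_left nhdsWithin_le_nhds).congr fun ε => ?_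
  rw [Pi.mul_apply, abs_mul, ← mul_assoc, ← sq, sq_abs]

theorem eventually_tfWidth_div_rpow_le (hα : 0 < α) (Ω₁ : ℝ) {c : ℝ} (hc : 0 < c) :
    ∀ᶠ ε : ℝ in 𝓝[>] 0, tfWidth (Ω₁ / ε ^ α) ≤ c := by
  have h := ((tendsto_rpow_nhdsGT_zero hα).const_mul 4).div_const (√π * Ω₁)
  simp only [mul_zero, zero_div, ← tfWidth_div_rpow] at h
  exact h.eventually_le_const hc

theorem eventually_rpow_mul_gpGround_mem_Icc (hΩ : 0 < Ω₁) (hα : 0 < α) :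
    ∀ᶠ ε : ℝ in 𝓝[>] 0, ε ^ (2 + 2 * α) * gpGround ε (Ω₁ / ε ^ (1 + α)) ∈
      Set.Icc (-(Ω₁ ^ 2 / 4) * (1 - 8 * ε ^ α / (3 * √π * Ω₁)))
        (-(Ω₁ ^ 2 / 4) * (1 - 8 * ε ^ α / (3 * √π * Ω₁)) + (64 * π + 10) * ε ^ (2 * α) +
          π * Ω₁ ^ 2 * (|log (√π * Ω₁ / 2)| + α) * ε ^ 2 * |log ε|) := by
  filter_upwards [Ioc_mem_nhdsGT one_pos,
    (tendsto_abs_atBot_atTop.comp tendsto_log_nhdsGT_zero).eventually_ge_atTop 1,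
    eventually_tfWidth_div_rpow_le hα Ω₁ (by norm_num : (0 : ℝ) < 1 / 12)] with ε hε hlog hδ
  exact ⟨le_rpow_mul_gpGround hΩ hε.1 (by linarith),
    rpow_mul_gpGround_le hΩ hα.le hε.1 hε.2 hlog hδ⟩

theorem tendsto_tfEnergy_expansion (hα : 0 < α) (Ω₁ : ℝ) :
    Tendsto (fun ε : ℝ => -(Ω₁ ^ 2 / 4) * (1 - 8 * ε ^ α / (3 * √π * Ω₁))) (𝓝[>] 0)
      (𝓝 (-(Ω₁ ^ 2 / 4))) := by
  simpa using ((((tendsto_rpow_nhdsGT_zero hα).const_mul 8).div_const (3 * √π * Ω₁)).const_sub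
    1).const_mul (-(Ω₁ ^ 2 / 4))

theorem tendsto_tfEnergy_expansion_add_remainder (hα : 0 < α) (Ω₁ C₁ C₂ : ℝ) :
    Tendsto (fun ε : ℝ => -(Ω₁ ^ 2 / 4) * (1 - 8 * ε ^ α / (3 * √π * Ω₁)) + C₁ * ε ^ (2 * α) +
      C₂ * ε ^ 2 * |log ε|) (𝓝[>] 0) (𝓝 (-(Ω₁ ^ 2 / 4))) := by
  simpa [mul_assoc] using ((tendsto_tfEnergy_expansion hα Ω₁).add
    ((tendsto_rpow_nhdsGT_zero (mul_pos two_pos hα)).const_mul C₁)).add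
    (tendsto_sq_mul_abs_log_nhdsGT_zero.const_mul C₂)

end RapidRotation

theorem stmt17 (Ω₁ α : ℝ) (hΩ : 0 < Ω₁) (hα : 0 < α) :
    (∃ (C₁ C₂ ε₀ : ℝ), 0 < ε₀ ∧ ∀ ε : ℝ, 0 < ε → ε < ε₀ →
      -(Ω₁ ^ 2 / 4) * (1 - 8 * ε ^ α / (3 * Real.sqrt π * Ω₁)) ≤
        ε ^ (2 + 2 * α) * gpGround ε (Ω₁ / ε ^ (1 + α)) ∧
      ε ^ (2 + 2 * α) * gpGround ε (Ω₁ / ε ^ (1 + α)) ≤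
        -(Ω₁ ^ 2 / 4) * (1 - 8 * ε ^ α / (3 * Real.sqrt π * Ω₁))
          + C₁ * ε ^ (2 * α) + C₂ * ε ^ 2 * |Real.log ε|) ∧
    Tendsto (fun ε : ℝ => ε ^ (2 + 2 * α) * gpGround ε (Ω₁ / ε ^ (1 + α)))
      (nhdsWithin 0 (Set.Ioi 0)) (nhds (-(Ω₁ ^ 2 / 4))) := by
  have hbounds := eventually_rpow_mul_gpGround_mem_Icc hΩ hα
  constructor
  · obtain ⟨ε₀, hε₀, hsub⟩ := mem_nhdsGT_iff_exists_Ioo_subset.1 hbounds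
    exact ⟨_, _, ε₀, hε₀, fun ε hε hlt => hsub ⟨hε, hlt⟩⟩
  · exact tendsto_of_tendsto_of_tendsto_of_le_of_le' (tendsto_tfEnergy_expansion hα Ω₁)
      (tendsto_tfEnergy_expansion_add_remainder hα Ω₁ _ _) (hbounds.mono fun _ h => h.1)
      (hbounds.mono fun _ h => h.2)
end
end
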